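/- arXiv:1501.07424 — 3 statements merged into one kernel-verified Lean document; each statement's English description precedes it below -/
import Mathlib

section
/- For every ∅′-computable 2-bounded coloring f : [ℕ]² → ℕ, there exists a computable 2-bounded coloring g : [ℕ]³ → ℕ such that every infinite rainbow for g is an infinite rainbow for f. -/
/-!
The argument has two parts.

*Limit lemma.* The translation `toCode` of oracle codes into Mathlib's codes, and the primitive
recursive decoder `decTr` of their numbers, give `∅'` as the domain of a partial recursive function.
Hence `∅'` is the limit of a primitive recursive sequence of guesses (`limApprox_jump`). Induction
on oracle codes (`LimApprox.eval`) extends this to every function partial recursive in `∅'`: run the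
computation with the stage `s` guesses as oracle, searching only below `s`. A convergent computation
uses finitely many values, each eventually correct, and nothing is required elsewhere, so the
approximation can be total with arbitrary values off the domain.

*The coloring.* Let `H s p` converge to the color under `f` of the pair coded by `p`. For each `s`
the coloring `H s` is made 2-bounded by letting only the first two pairs in each class share a
color (`color`), and `g x y z` is the pair formed by `z` and the resulting color of `(x, y)` at
stage `z`. This `g` is 2-bounded by `color_inj`. If two distinct pairs `p < p'` (as codes) from `R`
have the same color under `f`, then at any stage where `H` is correct on all codes up to `p'`, these
two are exactly the first two members of their class, by 2-boundedness of `f`, and so share a color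
(`color_eq_of_agree`). As `R` is infinite, it contains such a stage `z` above both pairs, and `g`
takes the same value on the two triples, so `R` is not a rainbow for `g`.
-/

open Classical Filter

noncomputable section

/-- Codes for partial functions recursive in an oracle. -/
inductive OCode : Type
  | zero | succ | left | right | oracle
  | pair (a b : OCode) | comp (a b : OCode) | prec (a b : OCode) | rfind' (a : OCode)

/-- Evaluation of an oracle code with oracle `O`. -/
def OCode.eval (O : ℕ →. ℕ) : OCode → ℕ →. ℕ
  | .zero => pure 0
  | .succ => Nat.succ
  | .left => ↑fun n : ℕ => n.unpair.1
  | .right => ↑fun n : ℕ => n.unpair.2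
  | .oracle => O
  | .pair a b => fun n => Nat.pair <$> a.eval O n <*> b.eval O n
  | .comp a b => fun n => b.eval O n >>= a.eval O
  | .prec a b => Nat.unpaired fun m n =>
      n.rec (a.eval O m) fun y IH => do let i ← IH; b.eval O (Nat.pair m (Nat.pair y i))
  | .rfind' a => fun n => Nat.rfind fun m => (fun k => k = 0) <$> a.eval O (Nat.pair n m)

/-- An injective numbering of oracle codes. -/
def OCode.encodeC : OCode → ℕ
  | .zero => Nat.pair 0 0
  | .succ => Nat.pair 1 0
  | .left => Nat.pair 2 0
  | .right => Nat.pair 3 0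
  | .oracle => Nat.pair 4 0
  | .pair a b => Nat.pair 5 (Nat.pair a.encodeC b.encodeC)
  | .comp a b => Nat.pair 6 (Nat.pair a.encodeC b.encodeC)
  | .prec a b => Nat.pair 7 (Nat.pair a.encodeC b.encodeC)
  | .rfind' a => Nat.pair 8 a.encodeC

/-- `f` is partial recursive in the oracle `O`. -/
def RecIn (O : ℕ →. ℕ) (f : ℕ →. ℕ) : Prop := ∃ c : OCode, c.eval O = f

/-- The `e`-th partial function recursive in `O` (`Φ_e^O`). -/
def phi (O : ℕ →. ℕ) (e : ℕ) : ℕ →. ℕ :=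
  if h : ∃ c : OCode, c.encodeC = e then h.choose.eval O else fun _ => Part.none

/-- The characteristic function of a set of naturals, as an oracle. -/
def chOracle (X : Set ℕ) : ℕ →. ℕ := fun n => Part.some (if n ∈ X then 1 else 0)

/-- A total function as an oracle. -/
def fnOracle (f : ℕ → ℕ) : ℕ →. ℕ := fun n => Part.some (f n)

/-- A two-variable total function as an oracle. -/
def pairFnOracle (f : ℕ → ℕ → ℕ) : ℕ →. ℕ :=
  fun n => Part.some (f n.unpair.1 n.unpair.2)

/-- The Turing jump of a set `X` : the halting problem relative to `X`. -/
def jumpSet (X : Set ℕ) : Set ℕ := {e | (phi (chOracle X) e e).Dom}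

/-- The effective join of two sets of naturals. -/
def joinSet (A B : Set ℕ) : Set ℕ :=
  {n | (n % 2 = 0 ∧ n / 2 ∈ A) ∨ (n % 2 = 1 ∧ n / 2 ∈ B)}

/-- The join of two oracles. -/
def joinO (O₁ O₂ : ℕ →. ℕ) : ℕ →. ℕ :=
  fun n => if n % 2 = 0 then O₁ (n / 2) else O₂ (n / 2)

/-- Turing reducibility between sets of naturals. -/
def setLEset (A B : Set ℕ) : Prop :=
  RecIn (chOracle B) (fnOracle fun n => if n ∈ A then 1 else 0)


/-! ### Partial recursive functions and oracle codes -/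

theorem recIn_of_partrec (O : ℕ →. ℕ) {F : ℕ →. ℕ} (h : Nat.Partrec F) : RecIn O F := by
  induction h with
  | zero => exact ⟨.zero, rfl⟩
  | succ => exact ⟨.succ, rfl⟩
  | left => exact ⟨.left, rfl⟩
  | right => exact ⟨.right, rfl⟩
  | pair _ _ iha ihb =>
    obtain ⟨a, rfl⟩ := iha; obtain ⟨b, rfl⟩ := ihb
    exact ⟨.pair a b, rfl⟩
  | comp _ _ iha ihb =>
    obtain ⟨a, rfl⟩ := iha; obtain ⟨b, rfl⟩ := ihb
    exact ⟨.comp a b, rfl⟩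
  | prec _ _ iha ihb =>
    obtain ⟨a, rfl⟩ := iha; obtain ⟨b, rfl⟩ := ihb
    exact ⟨.prec a b, rfl⟩
  | rfind _ iha =>
    obtain ⟨a, rfl⟩ := iha
    exact ⟨.rfind' a, rfl⟩

/-- Translation of oracle codes into oracle-free codes, correct for the empty oracle: an oracle
query becomes the constant `0`. Mathlib's `rfind'` takes the starting point of the search as an
extra argument, here set to `0`. -/
def toCode : OCode → Nat.Partrec.Code
  | .zero => .zero
  | .succ => .succ
  | .left => .left
  | .right => .right
  | .oracle => .zero
  | .pair a b => .pair (toCode a) (toCode b)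
  | .comp a b => .comp (toCode a) (toCode b)
  | .prec a b => .prec (toCode a) (toCode b)
  | .rfind' a => .comp (.rfind' (toCode a)) (.pair .id .zero)

theorem eval_toCode (c : OCode) : (toCode c).eval = c.eval (chOracle ∅) := by
  induction c with
  | zero => rfl
  | succ => rfl
  | left => rfl
  | right => rfl
  | oracle =>
    funext n
    simp only [toCode, Nat.Partrec.Code.eval, OCode.eval, chOracle, Set.mem_empty_iff_false,
      if_false]
    rfl
  | pair a b iha ihb =>
    simp only [toCode, Nat.Partrec.Code.eval, OCode.eval, iha, ihb]
    rfl
  | comp a b iha ihb =>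
    simp only [toCode, Nat.Partrec.Code.eval, OCode.eval, iha, ihb]
    rfl
  | prec a b iha ihb =>
    simp only [toCode, Nat.Partrec.Code.eval, OCode.eval, iha, ihb]
    rfl
  | rfind' a iha =>
    funext n
    have h0 : (Nat.Partrec.Code.pair .id .zero).eval n = Part.some (Nat.pair n 0) := by
      change Nat.pair <$> Nat.Partrec.Code.id.eval n <*> Part.some 0 = _
      rw [Nat.Partrec.Code.eval_id]
      simp [Seq.seq]
    change ((Nat.Partrec.Code.pair .id .zero).eval n).bind (toCode a).rfind'.eval =
      Nat.rfind fun m => (fun k => k = 0) <$> a.eval (chOracle ∅) (Nat.pair n m)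
    rw [h0, ← iha]
    refine (Part.bind_some _ _).trans ?_
    change (Nat.unpaired (fun b m => (Nat.rfind fun k => (fun m => decide (m = 0)) <$>
      (toCode a).eval (Nat.pair b (k + m))).map (· + m)) (Nat.pair n 0)) = _
    simp only [Nat.unpaired, Nat.unpair_pair, Nat.add_zero]
    exact Part.map_id' (fun _ => rfl) _

/-! ### The halting problem is a primitive recursive limit -/

/-- One step of the course-of-values recursion that decodes a number `n` in the numbering
`OCode.encodeC` and translates the result by `toCode`; `l` lists the answers for `m < n`. -/
def decStep (n : ℕ) (l : List (Option Nat.Partrec.Code)) : Option Nat.Partrec.Code :=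
  if n = Nat.pair 0 0 then some .zero
  else if n = Nat.pair 1 0 then some .succ
  else if n = Nat.pair 2 0 then some .left
  else if n = Nat.pair 3 0 then some .right
  else if n = Nat.pair 4 0 then some .zero
  else if n.unpair.1 = 5 then
    (l.getD n.unpair.2.unpair.1 none).bind fun a =>
      (l.getD n.unpair.2.unpair.2 none).map fun b => .pair a b
  else if n.unpair.1 = 6 then
    (l.getD n.unpair.2.unpair.1 none).bind fun a =>
      (l.getD n.unpair.2.unpair.2 none).map fun b => .comp a b
  else if n.unpair.1 = 7 then
    (l.getD n.unpair.2.unpair.1 none).bind fun a =>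
      (l.getD n.unpair.2.unpair.2 none).map fun b => .prec a b
  else if n.unpair.1 = 8 then
    (l.getD n.unpair.2 none).map fun a => .comp (.rfind' a) (.pair .id .zero)
  else none

/-- The list of the first `n` values of the decoder `decTr`. -/
def decList (n : ℕ) : List (Option Nat.Partrec.Code) :=
  Nat.rec [] (fun m l => l ++ [decStep m l]) n

/-- The oracle-free translation of the oracle code numbered `n`, or `none` if `n` numbers no
code. -/
def decTr (n : ℕ) : Option Nat.Partrec.Code := decStep n (decList n)

theorem decList_succ (n : ℕ) : decList (n + 1) = decList n ++ [decTr n] := rfl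

theorem length_decList (n : ℕ) : (decList n).length = n := by
  induction n with
  | zero => rfl
  | succ n ih => simp [decList_succ, ih]

theorem getD_decList {m n : ℕ} (h : m < n) : (decList n).getD m none = decTr m := by
  induction n with
  | zero => omega
  | succ n ih =>
    rw [decList_succ]
    rcases Nat.lt_succ_iff_lt_or_eq.1 h with h | rfl
    · rw [List.getD_append _ _ _ _ (by rwa [length_decList]), ih h]
    · rw [List.getD_append_right _ _ _ _ (by rw [length_decList])]
      simp [length_decList]

section DecTrPrimrec
open Primrec

theorem primrec_decStep : Primrec₂ decStep := by
  have hn : Primrec fun p : ℕ × List (Option Nat.Partrec.Code) => p.1 := fst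
  have hk : Primrec fun p : ℕ × List (Option Nat.Partrec.Code) => p.1.unpair.1 :=
    fst.comp (unpair.comp fst)
  have hr : Primrec fun p : ℕ × List (Option Nat.Partrec.Code) => p.1.unpair.2 :=
    snd.comp (unpair.comp fst)
  have la : Primrec fun p : ℕ × List (Option Nat.Partrec.Code) =>
      p.2.getD p.1.unpair.2.unpair.1 none :=
    (list_getD none).comp snd (fst.comp (unpair.comp hr))
  have lb : Primrec fun p : ℕ × List (Option Nat.Partrec.Code) =>
      p.2.getD p.1.unpair.2.unpair.2 none :=
    (list_getD none).comp snd (snd.comp (unpair.comp hr))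
  have lc : Primrec fun p : ℕ × List (Option Nat.Partrec.Code) =>
      p.2.getD p.1.unpair.2 none :=
    (list_getD none).comp snd hr
  have bin : ∀ C : Nat.Partrec.Code → Nat.Partrec.Code → Nat.Partrec.Code, Primrec₂ C →
      Primrec fun p : ℕ × List (Option Nat.Partrec.Code) =>
        (p.2.getD p.1.unpair.2.unpair.1 none).bind fun a =>
          (p.2.getD p.1.unpair.2.unpair.2 none).map fun b => C a b := fun C hC =>
    option_bind la (option_map (lb.comp fst) (hC.comp (snd.comp fst) snd).to₂).to₂
  have eqn : ∀ k : ℕ, PrimrecPred fun p : ℕ × List (Option Nat.Partrec.Code) => p.1 = k :=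
    fun k => Primrec.eq.comp hn (const k)
  have eqk : ∀ k : ℕ, PrimrecPred fun p : ℕ × List (Option Nat.Partrec.Code) =>
      p.1.unpair.1 = k := fun k => Primrec.eq.comp hk (const k)
  refine Primrec.ite (eqn _) (const _) <| Primrec.ite (eqn _) (const _) <|
    Primrec.ite (eqn _) (const _) <| Primrec.ite (eqn _) (const _) <|
    Primrec.ite (eqn _) (const _) <|
    Primrec.ite (eqk _) (bin _ Nat.Partrec.Code.primrec₂_pair) <|
    Primrec.ite (eqk _) (bin _ Nat.Partrec.Code.primrec₂_comp) <|
    Primrec.ite (eqk _) (bin _ Nat.Partrec.Code.primrec₂_prec) <|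
    Primrec.ite (eqk _) (option_map lc ?_) (const _)
  exact (Nat.Partrec.Code.primrec₂_comp.comp (Nat.Partrec.Code.primrec_rfind'.comp snd)
    (const _)).to₂

theorem primrec_dec : Primrec decTr := by
  have h : Primrec decList :=
    nat_rec₁ [] (list_concat.comp snd (primrec_decStep.comp fst snd)).to₂
  exact primrec_decStep.comp Primrec.id h

end DecTrPrimrec

theorem lt_pair_right {k : ℕ} (hk : 0 < k) (r : ℕ) : r < Nat.pair k r := by
  rw [Nat.pair]; split_ifs <;> nlinarith

/-- Components of a composite code have smaller numbers, so the list available to `decStep`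
already contains their decodings. -/
theorem getD_decList_pair {k r m : ℕ} (hk : 0 < k) (hm : m ≤ r) :
    (decList (Nat.pair k r)).getD m none = decTr m :=
  getD_decList (hm.trans_lt (lt_pair_right hk r))

theorem dec_encodeC (c : OCode) : decTr c.encodeC = some (toCode c) := by
  have hp : ∀ k a b, 0 < k → (decList (Nat.pair k (Nat.pair a b))).getD a none = decTr a :=
    fun k a b hk => getD_decList_pair hk (Nat.left_le_pair a b)
  have hq : ∀ k a b, 0 < k → (decList (Nat.pair k (Nat.pair a b))).getD b none = decTr b :=
    fun k a b hk => getD_decList_pair hk (Nat.right_le_pair a b)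
  have hs : ∀ k a, 0 < k → (decList (Nat.pair k a)).getD a none = decTr a :=
    fun k a hk => getD_decList_pair hk le_rfl
  induction c with
  | zero => simp [OCode.encodeC, decTr, decStep, toCode]
  | succ => simp [OCode.encodeC, decTr, decStep, toCode]
  | left => simp [OCode.encodeC, decTr, decStep, toCode]
  | right => simp [OCode.encodeC, decTr, decStep, toCode]
  | oracle => simp [OCode.encodeC, decTr, decStep, toCode]
  | pair a b iha ihb =>
    rw [OCode.encodeC, decTr]
    simp [decStep, toCode, -List.getD_eq_getElem?_getD, hp, hq, iha, ihb]
  | comp a b iha ihb =>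
    rw [OCode.encodeC, decTr]
    simp [decStep, toCode, -List.getD_eq_getElem?_getD, hp, hq, iha, ihb]
  | prec a b iha ihb =>
    rw [OCode.encodeC, decTr]
    simp [decStep, toCode, -List.getD_eq_getElem?_getD, hp, hq, iha, ihb]
  | rfind' a iha =>
    rw [OCode.encodeC, decTr]
    simp [decStep, toCode, -List.getD_eq_getElem?_getD, hs, iha]

theorem exists_encodeC_of_dec (n : ℕ) : ∀ d, decTr n = some d → ∃ c : OCode, c.encodeC = n := by
  induction n using Nat.strong_induction_on with
  | _ n ih =>
    intro d hd
    have hn : Nat.pair n.unpair.1 n.unpair.2 = n := Nat.pair_unpair n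
    have hr : Nat.pair n.unpair.2.unpair.1 n.unpair.2.unpair.2 = n.unpair.2 := Nat.pair_unpair _
    have h2 : n.unpair.1 ≠ 0 → n.unpair.2 < n := fun h => by
      conv_rhs => rw [← hn]
      exact lt_pair_right (Nat.pos_of_ne_zero h) _
    have hl := Nat.unpair_left_le n.unpair.2
    have hri := Nat.unpair_right_le n.unpair.2
    unfold decTr decStep at hd
    split_ifs at hd with h0 h1 h2' h3 h4 h5 h6 h7 h8
    · exact ⟨.zero, h0.symm⟩
    · exact ⟨.succ, h1.symm⟩
    · exact ⟨.left, h2'.symm⟩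
    · exact ⟨.right, h3.symm⟩
    · exact ⟨.oracle, h4.symm⟩
    · have hlt := h2 (by omega)
      rw [getD_decList (by omega), getD_decList (by omega)] at hd
      obtain ⟨a, ha, hd⟩ := Option.bind_eq_some_iff.1 hd
      obtain ⟨b, hb, -⟩ := Option.map_eq_some_iff.1 hd
      obtain ⟨a', ha'⟩ := ih _ (by omega) _ ha
      obtain ⟨b', hb'⟩ := ih _ (by omega) _ hb
      exact ⟨.pair a' b', by rw [OCode.encodeC, ha', hb', hr, ← h5, hn]⟩
    · have hlt := h2 (by omega)
      rw [getD_decList (by omega), getD_decList (by omega)] at hd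
      obtain ⟨a, ha, hd⟩ := Option.bind_eq_some_iff.1 hd
      obtain ⟨b, hb, -⟩ := Option.map_eq_some_iff.1 hd
      obtain ⟨a', ha'⟩ := ih _ (by omega) _ ha
      obtain ⟨b', hb'⟩ := ih _ (by omega) _ hb
      exact ⟨.comp a' b', by rw [OCode.encodeC, ha', hb', hr, ← h6, hn]⟩
    · have hlt := h2 (by omega)
      rw [getD_decList (by omega), getD_decList (by omega)] at hd
      obtain ⟨a, ha, hd⟩ := Option.bind_eq_some_iff.1 hd
      obtain ⟨b, hb, -⟩ := Option.map_eq_some_iff.1 hd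
      obtain ⟨a', ha'⟩ := ih _ (by omega) _ ha
      obtain ⟨b', hb'⟩ := ih _ (by omega) _ hb
      exact ⟨.prec a' b', by rw [OCode.encodeC, ha', hb', hr, ← h7, hn]⟩
    · have hlt := h2 (by omega)
      rw [getD_decList (by omega)] at hd
      obtain ⟨a, ha, -⟩ := Option.map_eq_some_iff.1 hd
      obtain ⟨a', ha'⟩ := ih _ (by omega) _ ha
      exact ⟨.rfind' a', by rw [OCode.encodeC, ha', ← h8, hn]⟩

theorem mem_jumpSet_empty (e : ℕ) :
    e ∈ jumpSet ∅ ↔ ∃ d, decTr e = some d ∧ (d.eval e).Dom := by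
  change (phi (chOracle ∅) e e).Dom ↔ _
  by_cases h : ∃ c : OCode, c.encodeC = e
  · have h0 : phi (chOracle ∅) e = h.choose.eval (chOracle ∅) := dif_pos h
    rw [h0]
    have h1 : decTr e = some (toCode h.choose) := by
      conv_lhs => rw [← h.choose_spec]
      exact dec_encodeC _
    simp [h1, eval_toCode]
  · have h0 : phi (chOracle ∅) e = fun _ => Part.none := dif_neg h
    rw [h0]
    refine iff_of_false (fun hd => hd) ?_
    rintro ⟨d, hd, -⟩
    exact h (exists_encodeC_of_dec e d hd)

/-- `F` is a limit of a primitive recursive function on its domain; nothing is asked of the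
approximation outside the domain. -/
def LimApprox (F : ℕ →. ℕ) : Prop :=
  ∃ H : ℕ → ℕ → ℕ, Primrec₂ H ∧ ∀ n v, v ∈ F n → ∀ᶠ s in atTop, H s n = v

/-- At stage `s`, guess that `e ∈ ∅'` when the `e`-th computation on input `e` halts within `s`
steps. -/
theorem limApprox_jump : LimApprox (chOracle (jumpSet ∅)) := by
  let K : ℕ → ℕ → Option ℕ := fun s e => (decTr e).bind fun d => Nat.Partrec.Code.evaln s d e
  have hK : Primrec₂ K :=
    Primrec.option_bind (primrec_dec.comp Primrec.snd)
      (Nat.Partrec.Code.primrec_evaln.comp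
        (((Primrec.fst.comp Primrec.fst).pair Primrec.snd).pair
          (Primrec.snd.comp Primrec.fst))).to₂
  refine ⟨fun s e => if K s e = none then 0 else 1,
    Primrec.ite (Primrec.eq.comp hK (Primrec.const none)) (Primrec.const 0) (Primrec.const 1), ?_⟩
  intro e v hv
  rw [chOracle, Part.mem_some_iff] at hv
  subst hv
  by_cases he : e ∈ jumpSet ∅
  · rw [if_pos he]
    obtain ⟨d, hd, hdom⟩ := (mem_jumpSet_empty e).1 he
    obtain ⟨x, hx⟩ := Part.dom_iff_mem.1 hdom
    obtain ⟨k, hk⟩ := Nat.Partrec.Code.evaln_complete.1 hx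
    filter_upwards [eventually_ge_atTop k] with s hs
    have : K s e = some x := by
      simpa [K, hd] using Nat.Partrec.Code.evaln_mono hs hk
    simp [this]
  · rw [if_neg he]
    refine Eventually.of_forall fun s => if_pos ?_
    by_contra hne
    obtain ⟨x, hx⟩ := Option.ne_none_iff_exists'.1 hne
    obtain ⟨d, hd, hx⟩ := Option.bind_eq_some_iff.1 hx
    exact he ((mem_jumpSet_empty e).2
      ⟨d, hd, Part.dom_iff_mem.2 ⟨x, Nat.Partrec.Code.evaln_sound hx⟩⟩)

/-! ### The limit lemma -/

theorem limApprox_of_primrec {F : ℕ → ℕ} (hF : Primrec F) : LimApprox (F : ℕ →. ℕ) :=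
  ⟨fun _ n => F n, hF.comp Primrec.snd, fun n v hv => Eventually.of_forall fun _ => by
    exact (Part.mem_some_iff.1 hv).symm⟩

theorem LimApprox.prec {a b : ℕ →. ℕ} (ha : LimApprox a) (hb : LimApprox b) :
    LimApprox (Nat.unpaired fun m n =>
      n.rec (a m) fun y IH => do let i ← IH; b (Nat.pair m (Nat.pair y i))) := by
  obtain ⟨A, hA, hA'⟩ := ha
  obtain ⟨B, hB, hB'⟩ := hb
  let R : ℕ → ℕ → ℕ → ℕ := fun s m n =>
    Nat.rec (A s m) (fun y i => B s (Nat.pair m (Nat.pair y i))) n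
  refine ⟨fun s p => R s p.unpair.1 p.unpair.2, ?_, ?_⟩
  · refine Primrec.nat_rec' (Primrec.snd.comp (Primrec.unpair.comp Primrec.snd))
      (hA.comp Primrec.fst (Primrec.fst.comp (Primrec.unpair.comp Primrec.snd)))
      (hB.comp (Primrec.fst.comp Primrec.fst) (Primrec₂.natPair.comp
        (Primrec.fst.comp (Primrec.unpair.comp (Primrec.snd.comp Primrec.fst)))
        (Primrec₂.natPair.comp (Primrec.fst.comp Primrec.snd)
          (Primrec.snd.comp Primrec.snd)))).to₂
  · intro p v hv
    simp only [Nat.unpaired] at hv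
    change ∀ᶠ s in atTop, R s p.unpair.1 p.unpair.2 = v
    generalize p.unpair.1 = m at *
    generalize p.unpair.2 = n at *
    induction n generalizing v with
    | zero => exact hA' m v hv
    | succ n ih =>
      obtain ⟨i, hi, hv⟩ := Part.mem_bind_iff.1 hv
      filter_upwards [ih i hi, hB' _ v hv] with s h1 h2
      change B s (Nat.pair m (Nat.pair n (R s m n))) = v
      rw [h1, h2]

/-- The unbounded search is approximated at stage `s` by the search below `s`. -/
theorem LimApprox.rfind {a : ℕ →. ℕ} (ha : LimApprox a) :
    LimApprox fun n => Nat.rfind fun m => (fun k => k = 0) <$> a (Nat.pair n m) := by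
  obtain ⟨A, hA, hA'⟩ := ha
  refine ⟨fun s n => (List.range s).findIdx fun m => A s (Nat.pair n m) == 0, ?_, ?_⟩
  · exact Primrec.list_findIdx (Primrec.list_range.comp Primrec.fst)
      (Primrec.beq.comp (hA.comp (Primrec.fst.comp Primrec.fst)
        (Primrec₂.natPair.comp (Primrec.snd.comp Primrec.fst) Primrec.snd))
        (Primrec.const 0)).to₂
  · intro n v hv
    obtain ⟨hv0, hlt⟩ := Nat.mem_rfind.1 hv
    have h0 : ∀ᶠ s in atTop, A s (Nat.pair n v) = 0 := by
      obtain ⟨k, hk, hk0⟩ := (Part.mem_map_iff _).1 hv0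
      have : k = 0 := by simpa using hk0
      subst this
      exact hA' _ _ hk
    have h1 : ∀ᶠ s in atTop, ∀ m ∈ Set.Iio v, A s (Nat.pair n m) ≠ 0 := by
      rw [eventually_all_finite (Set.finite_Iio v)]
      intro m hm
      obtain ⟨k, hk, hk0⟩ := (Part.mem_map_iff _).1 (hlt hm)
      have : k ≠ 0 := by simpa using hk0
      filter_upwards [hA' _ _ hk] with s hs
      rwa [hs]
    filter_upwards [h0, h1, eventually_gt_atTop v] with s h0 h1 hs
    rw [List.findIdx_eq (by simpa using hs)]
    refine ⟨by simpa using h0, fun j hj => ?_⟩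
    simpa using h1 j hj

/-- Limit approximability passes from an oracle to everything computable from it. -/
theorem LimApprox.eval {O : ℕ →. ℕ} (hO : LimApprox O) (c : OCode) : LimApprox (c.eval O) := by
  induction c with
  | zero => exact limApprox_of_primrec (Primrec.const 0)
  | succ => exact limApprox_of_primrec Primrec.succ
  | left => exact limApprox_of_primrec (Primrec.fst.comp Primrec.unpair)
  | right => exact limApprox_of_primrec (Primrec.snd.comp Primrec.unpair)
  | oracle => exact hO
  | pair a b iha ihb =>
    obtain ⟨A, hA, hA'⟩ := iha
    obtain ⟨B, hB, hB'⟩ := ihb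
    refine ⟨fun s n => Nat.pair (A s n) (B s n), Primrec₂.natPair.comp hA hB, ?_⟩
    intro n v hv
    have hv : ∃ x ∈ a.eval O n, ∃ y ∈ b.eval O n, Nat.pair x y = v := by
      simpa [OCode.eval, Seq.seq] using hv
    obtain ⟨x, hx, y, hy, rfl⟩ := hv
    filter_upwards [hA' n x hx, hB' n y hy] with s h1 h2
    rw [h1, h2]
  | comp a b iha ihb =>
    obtain ⟨A, hA, hA'⟩ := iha
    obtain ⟨B, hB, hB'⟩ := ihb
    refine ⟨fun s n => A s (B s n), hA.comp Primrec.fst hB, ?_⟩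
    intro n v hv
    obtain ⟨x, hx, hv⟩ := Part.mem_bind_iff.1 hv
    filter_upwards [hB' n x hx, hA' x v hv] with s h1 h2
    rw [h1, h2]
  | prec a b iha ihb => exact iha.prec ihb
  | rfind' a iha => exact iha.rfind

/-! ### The coloring of triples -/

/-- The codes `q < p` of increasing pairs that have the same color as `p` under `h`. -/
def prior (h : ℕ → ℕ) (p : ℕ) : List ℕ :=
  (List.range p).filter fun q => decide (q.unpair.1 < q.unpair.2) && (h q == h p)

/-- A 2-bounded modification of the coloring `h` of coded pairs: the first two members of each
color class keep a common color, namely the code of the first, and any further member is colored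
by its own code. -/
def color (h : ℕ → ℕ) (p : ℕ) : ℕ :=
  if (prior h p).length = 1 then (prior h p).headI else p

theorem mem_prior {h : ℕ → ℕ} {p q : ℕ} :
    q ∈ prior h p ↔ q < p ∧ q.unpair.1 < q.unpair.2 ∧ h q = h p := by
  simp [prior]

theorem color_eq (h : ℕ → ℕ) (p : ℕ) : color h p = p ∨ prior h p = [color h p] := by
  unfold color
  split_ifs with hl
  · obtain ⟨a, ha⟩ := List.length_eq_one_iff.1 hl
    right; simp [ha]
  · exact Or.inl rfl

/-- Two distinct members of a `color` class cannot both have come after the class's first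
member. -/
theorem color_inj {h : ℕ → ℕ} {c p q : ℕ} (hp : p.unpair.1 < p.unpair.2)
    (hq : q.unpair.1 < q.unpair.2) (hpc : color h p = c) (hqc : color h q = c)
    (hp' : p ≠ c) (hq' : q ≠ c) : p = q := by
  have h1 := (color_eq h p).resolve_left (by rw [hpc]; exact hp'.symm)
  have h2 := (color_eq h q).resolve_left (by rw [hqc]; exact hq'.symm)
  rw [hpc] at h1
  rw [hqc] at h2
  have e1 : h c = h p := (mem_prior.1 (h1 ▸ List.mem_singleton_self c)).2.2
  have e2 : h c = h q := (mem_prior.1 (h2 ▸ List.mem_singleton_self c)).2.2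
  rcases lt_trichotomy p q with hlt | heq | hlt
  · have : p ∈ prior h q := mem_prior.2 ⟨hlt, hp, e1.symm.trans e2⟩
    rw [h2, List.mem_singleton] at this
    exact absurd this hp'
  · exact heq
  · have : q ∈ prior h p := mem_prior.2 ⟨hlt, hq, e2.symm.trans e1⟩
    rw [h1, List.mem_singleton] at this
    exact absurd this hq'

theorem primrec_color {H : ℕ → ℕ → ℕ} (hH : Primrec₂ H) :
    Primrec₂ fun s p => color (H s) p := by
  have hpr : Primrec fun a : ℕ × ℕ => prior (H a.1) a.2 := by
    have : Primrec fun a : ℕ × ℕ => (List.range a.2).filterMap fun q =>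
        if q.unpair.1 < q.unpair.2 ∧ H a.1 q = H a.1 a.2 then some q else none := by
      have hite : Primrec fun x : (ℕ × ℕ) × ℕ =>
          if x.2.unpair.1 < x.2.unpair.2 ∧ H x.1.1 x.2 = H x.1.1 x.1.2 then some x.2 else none := by
        refine Primrec.ite (PrimrecPred.and ?_ ?_) (Primrec.option_some.comp Primrec.snd)
          (Primrec.const none)
        · exact Primrec.nat_lt.comp (Primrec.fst.comp (Primrec.unpair.comp Primrec.snd))
            (Primrec.snd.comp (Primrec.unpair.comp Primrec.snd))
        · exact Primrec.eq.comp (hH.comp (Primrec.fst.comp Primrec.fst) Primrec.snd)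
            (hH.comp (Primrec.fst.comp Primrec.fst) (Primrec.snd.comp Primrec.fst))
      exact Primrec.listFilterMap (Primrec.list_range.comp Primrec.snd) hite.to₂
    refine this.of_eq fun a => ?_
    rw [prior, ← List.filterMap_eq_filter]
    congr 1
    funext q
    simp [Option.guard]
  exact Primrec.ite (Primrec.eq.comp (Primrec.list_length.comp hpr) (Primrec.const 1))
    (Primrec.list_headI.comp hpr) Primrec.snd

theorem encard_le_two_of {α : Type*} {s : Set α} (a : α → Prop)
    (h1 : ∀ x ∈ s, ∀ y ∈ s, a x → a y → x = y)
    (h2 : ∀ x ∈ s, ∀ y ∈ s, ¬ a x → ¬ a y → x = y) : s.encard ≤ 2 := by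
  have hs : s = {x ∈ s | a x} ∪ {x ∈ s | ¬ a x} := by
    ext x; by_cases a x <;> simp [*]
  rw [hs]
  refine (Set.encard_union_le _ _).trans ?_
  rw [← one_add_one_eq_two]
  refine add_le_add (Set.encard_le_one_iff.2 ?_) (Set.encard_le_one_iff.2 ?_)
  · exact fun x y hx hy => h1 x hx.1 y hy.1 hx.2 hy.2
  · exact fun x y hx hy => h2 x hx.1 y hy.1 hx.2 hy.2

/-- Two pairs of equal limit color, coded by `p < p'`, receive the same color as soon as `h` agrees
with the limit on all codes up to `p'`. -/
theorem color_eq_of_agree {f : ℕ → ℕ → ℕ}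
    (h2b : ∀ c : ℕ, {p : ℕ × ℕ | p.1 < p.2 ∧ f p.1 p.2 = c}.encard ≤ 2)
    {h : ℕ → ℕ} {p p' : ℕ} (hlt : p < p') (hp : p.unpair.1 < p.unpair.2)
    (hp' : p'.unpair.1 < p'.unpair.2)
    (hf : f p.unpair.1 p.unpair.2 = f p'.unpair.1 p'.unpair.2)
    (hh : ∀ q ∈ Set.Iic p', h q = f q.unpair.1 q.unpair.2) :
    color h p = color h p' := by
  have hinj : Function.Injective Nat.unpair := Nat.pairEquiv.symm.injective
  have hpp := hh p hlt.le
  have hpp' := hh p' (Set.mem_Iic.2 le_rfl)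
  -- A third pair of the same color would contradict 2-boundedness.
  have key : ∀ q, q < p' → q.unpair.1 < q.unpair.2 → h q = h p' → q = p := by
    intro q hq hqi hqe
    by_contra hne
    have hsub : ({q.unpair, p.unpair, p'.unpair} : Set (ℕ × ℕ)) ⊆
        {r : ℕ × ℕ | r.1 < r.2 ∧ f r.1 r.2 = f p'.unpair.1 p'.unpair.2} := by
      rintro r (rfl | rfl | rfl)
      · exact ⟨hqi, by rw [← hh q (Set.mem_Iic.2 hq.le), hqe, hpp']⟩
      · exact ⟨hp, hf⟩
      · exact ⟨hp', rfl⟩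
    have h3 : ({q.unpair, p.unpair, p'.unpair} : Set (ℕ × ℕ)).encard = 3 :=
      Set.encard_eq_three.2 ⟨_, _, _, fun e => hne (hinj e), fun e => hq.ne (hinj e),
        fun e => hlt.ne (hinj e), rfl⟩
    have := (Set.encard_le_encard hsub).trans (h2b _)
    rw [h3] at this
    exact absurd this (by decide)
  have hpe : h p = h p' := by rw [hpp, hpp', hf]
  have e1 : color h p = p := by
    refine (color_eq h p).resolve_right fun e => ?_
    have hm := mem_prior.1 (e ▸ List.mem_singleton_self (color h p))
    exact hm.1.ne (key _ (hm.1.trans hlt) hm.2.1 (hm.2.2.trans hpe))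
  have e2 : prior h p' = [p] := by
    have hnd : (prior h p').Nodup := List.Nodup.filter _ List.nodup_range
    refine List.perm_singleton.1 ((List.perm_ext_iff_of_nodup hnd (List.nodup_singleton p)).2 ?_)
    intro q
    rw [mem_prior, List.mem_singleton]
    constructor
    · exact fun hq => key q hq.1 hq.2.1 hq.2.2
    · rintro rfl
      exact ⟨hlt, hp, hpe⟩
  rw [e1, color, e2]
  rfl

/-- For every `∅'`-computable 2-bounded coloring of pairs there is a computable
2-bounded coloring of triples whose infinite rainbows are rainbows of the
original coloring. -/
theorem stmt4 (f : ℕ → ℕ → ℕ)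
    (hf : RecIn (chOracle (jumpSet ∅)) (pairFnOracle f))
    (h2b : ∀ c : ℕ, {p : ℕ × ℕ | p.1 < p.2 ∧ f p.1 p.2 = c}.encard ≤ 2) :
    ∃ g : ℕ → ℕ → ℕ → ℕ,
      RecIn (chOracle ∅)
        (fnOracle fun n => g n.unpair.1 n.unpair.2.unpair.1 n.unpair.2.unpair.2) ∧
      (∀ c : ℕ, {t : ℕ × ℕ × ℕ | t.1 < t.2.1 ∧ t.2.1 < t.2.2 ∧
        g t.1 t.2.1 t.2.2 = c}.encard ≤ 2) ∧
      ∀ R : Set ℕ, R.Infinite →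
        (∀ x ∈ R, ∀ y ∈ R, ∀ z ∈ R, ∀ x' ∈ R, ∀ y' ∈ R, ∀ z' ∈ R,
          x < y → y < z → x' < y' → y' < z' →
          g x y z = g x' y' z' → x = x' ∧ y = y' ∧ z = z') →
        ∀ x ∈ R, ∀ y ∈ R, ∀ x' ∈ R, ∀ y' ∈ R, x < y → x' < y' →
          f x y = f x' y' → x = x' ∧ y = y' := by
  obtain ⟨c, hc⟩ := hf
  obtain ⟨H, hH, hlim⟩ := limApprox_jump.eval c
  have hlim : ∀ q, ∀ᶠ s in atTop, H s q = f q.unpair.1 q.unpair.2 := fun q =>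
    hlim q _ (by rw [hc]; exact Part.mem_some _)
  refine ⟨fun x y z => Nat.pair z (color (H z) (Nat.pair x y)), ?_, ?_, ?_⟩
  · apply recIn_of_partrec
    apply Nat.Partrec.of_primrec
    rw [← Primrec.nat_iff]
    have hx : Primrec fun n : ℕ => n.unpair.1 := Primrec.fst.comp Primrec.unpair
    have hr : Primrec fun n : ℕ => n.unpair.2 := Primrec.snd.comp Primrec.unpair
    exact Primrec₂.natPair.comp (hr.comp hr)
      ((primrec_color hH).comp (hr.comp hr) (Primrec₂.natPair.comp hx (hx.comp hr)))
  · intro c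
    have hext : ∀ t u : ℕ × ℕ × ℕ, t.2.2 = u.2.2 → Nat.pair t.1 t.2.1 = Nat.pair u.1 u.2.1 →
        t = u := by
      rintro ⟨x, y, z⟩ ⟨x', y', z'⟩ hz hxy
      obtain ⟨h1, h2⟩ := Nat.pair_eq_pair.1 hxy
      simp_all
    have hz : ∀ {t : ℕ × ℕ × ℕ}, Nat.pair t.2.2 (color (H t.2.2) (Nat.pair t.1 t.2.1)) = c →
        t.2.2 = c.unpair.1 ∧ color (H c.unpair.1) (Nat.pair t.1 t.2.1) = c.unpair.2 := by
      rintro t rfl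
      simp
    refine encard_le_two_of (fun t => Nat.pair t.1 t.2.1 = c.unpair.2) ?_ ?_
    · rintro t ⟨-, -, ht⟩ u ⟨-, -, hu⟩ h1 h2
      exact hext t u ((hz ht).1.trans (hz hu).1.symm) (h1.trans h2.symm)
    · rintro t ⟨ht1, -, ht⟩ u ⟨hu1, -, hu⟩ h1 h2
      exact hext t u ((hz ht).1.trans (hz hu).1.symm)
        (color_inj (by simpa using ht1) (by simpa using hu1) (hz ht).2 (hz hu).2 h1 h2)
  · intro R hR hrain x hx y hy x' hx' y' hy' hxy hxy' hff
    by_contra hne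
    have hne' : Nat.pair x y ≠ Nat.pair x' y' := fun e => hne (Nat.pair_eq_pair.1 e)
    have hev : ∀ᶠ z in atTop, (∀ q ∈ Set.Iic (Nat.pair x y + Nat.pair x' y'),
        H z q = f q.unpair.1 q.unpair.2) ∧ y < z ∧ y' < z :=
      ((eventually_all_finite (Set.finite_Iic _)).2 fun q _ => hlim q).and
        ((eventually_gt_atTop y).and (eventually_gt_atTop y'))
    obtain ⟨z, ⟨hagree, hyz, hyz'⟩, hzR⟩ :=
      (hev.and_frequently (Nat.frequently_atTop_iff_infinite.2 hR)).exists
    have hcol : color (H z) (Nat.pair x y) = color (H z) (Nat.pair x' y') := by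
      rcases lt_or_gt_of_ne hne' with hlt | hlt
      · exact color_eq_of_agree h2b hlt (by simpa using hxy) (by simpa using hxy')
          (by simpa using hff) fun q hq => hagree q (Set.mem_Iic.2 (by
            have := Set.mem_Iic.1 hq; omega))
      · exact (color_eq_of_agree h2b hlt (by simpa using hxy') (by simpa using hxy)
          (by simpa using hff.symm) fun q hq => hagree q (Set.mem_Iic.2 (by
            have := Set.mem_Iic.1 hq; omega))).symm
    have := hrain x hx y hy z hzR x' hx' y' hy' z hzR hxy hyz hxy' hyz' (by
      simp only [hcol])
    exact hne ⟨this.1, this.2.1⟩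

end
end

section
/- Low basis theorem for Δ⁰₂ trees of known measure: for every set X, every X′-computable binary tree T ⊆ 2^{<ℕ} whose measure μ([T]) is a positive X′-computable real has an infinite path P with (X ⊕ P)′ ≤_T X′ (P is low over X). -/
/-!
The path is chosen by derandomising the statement that a random path of `T` is low over `X`.

For each program `e`, the strings `σ` that already make `e` halt on input `e` with oracle
`σ ⊕ X` generate an open set whose measure is approximated from below by the proportions of
such strings of length `k`. It is a `Π⁰₁(X)` question whether the measure that appears after
level `k` is at most a given `ε`, so `X'` computes moduli `N (e, m)`, that is, levels after which
at most `4 ^ (-⟨e, m⟩ - c)` of the measure appears (`exists_modulus`). For the complement of the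
tree, whose levels are only `X'`-computable, the same question would need `X''`; the hypothesis
that `μ([T])` is an `X'`-computable real is what provides the moduli
(`exists_modulus_tree`).

The gaps between two consecutive moduli are clopen sets of rapidly decreasing measures, uniformly
computable in `X'`, and together with a clopen approximation to the complement of the tree
their total measure is below `1`. The method of conditional expectations then yields an
`X'`-computable sequence `P` that avoids all of them (`exists_avoid`). Such a `P` stays in the
tree, and if `P ⊕ X` ever makes `e` halt on `e`, it does so within the first `N (e, 0)` bits of
`P`; hence `X'` computes the jump of `P ⊕ X` (`exists_path_of_modulus`, `mem_jumpSet_join`).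

The rest sets up relative computability: functions between coded types computable in an oracle
(`OComp`), and finite computation records, whose validity is primitive recursive, for the use
principle (`phi_dom_iff`, `primrec_conv`).
-/

open Classical Filter

noncomputable section

/-- The number of strings of length `s` in `T`. -/
def lvlCard (T : Set (List Bool)) (s : ℕ) : ℕ :=
  {σ ∈ T | σ.length = s}.ncard

/-- The measure of the set of paths of a tree `T ⊆ 2^{<ℕ}` under the uniform
measure on Cantor space. -/
def treeMeasure (T : Set (List Bool)) : ℝ :=
  ⨅ s : ℕ, (lvlCard T s : ℝ) / 2 ^ s

/-- The characteristic function of a set of binary strings, as a function on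
codes. -/
def listBoolChar (T : Set (List Bool)) : ℕ → ℕ := fun n =>
  match Encodable.decode (α := List Bool) n with
  | some σ => if σ ∈ T then 1 else 0
  | none => 0

namespace LowBasis

open Encodable

/-! ### Computability relative to an oracle -/

section

variable {O : ℕ →. ℕ}

theorem recIn_comp {F G : ℕ → ℕ} (hF : RecIn O (fnOracle F)) (hG : RecIn O (fnOracle G)) :
    RecIn O (fnOracle fun n => F (G n)) := by
  obtain ⟨a, ha⟩ := hF
  obtain ⟨b, hb⟩ := hG
  refine ⟨.comp a b, funext fun n => ?_⟩
  simp only [OCode.eval, ha, hb]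
  exact Part.bind_some _ _

theorem recIn_pair {F G : ℕ → ℕ} (hF : RecIn O (fnOracle F)) (hG : RecIn O (fnOracle G)) :
    RecIn O (fnOracle fun n => Nat.pair (F n) (G n)) := by
  obtain ⟨a, ha⟩ := hF
  obtain ⟨b, hb⟩ := hG
  refine ⟨.pair a b, funext fun n => ?_⟩
  simp [OCode.eval, ha, hb, fnOracle, Seq.seq]

theorem recIn_prec {F G : ℕ → ℕ} (hF : RecIn O (fnOracle F)) (hG : RecIn O (fnOracle G)) :
    RecIn O (fnOracle (Nat.unpaired fun z n =>
      n.rec (F z) fun y IH => G (Nat.pair z (Nat.pair y IH)))) := by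
  obtain ⟨a, ha⟩ := hF
  obtain ⟨b, hb⟩ := hG
  refine ⟨.prec a b, funext fun n => ?_⟩
  simp only [OCode.eval, ha, hb, fnOracle, Nat.unpaired]
  induction n.unpair.2 with
  | zero => rfl
  | succ k ih =>
    simp only [ih]
    exact Part.bind_some _ _

theorem recIn_primrec {F : ℕ → ℕ} (hF : Nat.Primrec F) : RecIn O (fnOracle F) := by
  induction hF with
  | zero => exact ⟨.zero, rfl⟩
  | succ => exact ⟨.succ, rfl⟩
  | left => exact ⟨.left, rfl⟩
  | right => exact ⟨.right, rfl⟩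
  | pair _ _ h1 h2 => exact recIn_pair h1 h2
  | comp _ _ h1 h2 => exact recIn_comp h1 h2
  | prec _ _ h1 h2 => exact recIn_prec h1 h2

theorem recIn_oracle (f : ℕ → ℕ) : RecIn (fnOracle f) (fnOracle f) := ⟨.oracle, rfl⟩

theorem recIn_find {F : ℕ → ℕ} (hF : RecIn O (fnOracle F)) (H : ∀ n, ∃ m, F (Nat.pair n m) = 0) :
    RecIn O (fnOracle fun n => Nat.find (H n)) := by
  obtain ⟨a, ha⟩ := hF
  refine ⟨.rfind' a, funext fun n => ?_⟩
  simp only [OCode.eval, ha, fnOracle]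
  apply Part.eq_some_iff.2
  refine Nat.mem_rfind.2 ⟨?_, ?_⟩
  · simpa using Nat.find_spec (H n)
  · intro m hm
    simpa using Nat.find_min (H n) hm

variable {α β γ δ : Type*} [Primcodable α] [Primcodable β] [Primcodable γ] [Primcodable δ]

/-- A total function between coded types is computable in the oracle `O` when some total
`O`-recursive function on codes extends it. -/
def OComp (O : ℕ →. ℕ) (f : α → β) : Prop :=
  ∃ F : ℕ → ℕ, RecIn O (fnOracle F) ∧ ∀ a, F (encode a) = encode (f a)

/-- Decidability of a predicate relative to the oracle `O`. -/
def OPred (O : ℕ →. ℕ) (p : α → Prop) : Prop := OComp O fun a => decide (p a)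

theorem OComp.of_primrec {f : α → β} (hf : Primrec f) : OComp O f := by
  refine ⟨fun n => (encode ((decode (α := α) n).map f)).pred,
    recIn_primrec (Nat.Primrec.pred.comp hf), fun a => ?_⟩
  simp

theorem OComp.of_eq {f g : α → β} (hf : OComp O f) (h : ∀ a, f a = g a) : OComp O g :=
  (funext h : f = g) ▸ hf

theorem OComp.comp {f : β → γ} {g : α → β} (hf : OComp O f) (hg : OComp O g) :
    OComp O fun a => f (g a) := by
  obtain ⟨F, hF, hF'⟩ := hf
  obtain ⟨G, hG, hG'⟩ := hg
  exact ⟨_, recIn_comp hF hG, fun a => by simp [hF', hG']⟩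

theorem OComp.pair {f : α → β} {g : α → γ} (hf : OComp O f) (hg : OComp O g) :
    OComp O fun a => (f a, g a) := by
  obtain ⟨F, hF, hF'⟩ := hf
  obtain ⟨G, hG, hG'⟩ := hg
  exact ⟨_, recIn_pair hF hG, fun a => by simp [hF', hG']⟩

theorem OComp.prim₂ {h : β → γ → δ} (hh : Primrec₂ h) {f : α → β} {g : α → γ}
    (hf : OComp O f) (hg : OComp O g) : OComp O fun a => h (f a) (g a) :=
  (OComp.of_primrec (O := O) hh).comp (hf.pair hg)

theorem OComp.fst : OComp O (Prod.fst : α × β → α) := .of_primrec Primrec.fst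
theorem OComp.snd : OComp O (Prod.snd : α × β → β) := .of_primrec Primrec.snd
theorem OComp.id : OComp O (fun a : α => a) := .of_primrec Primrec.id
theorem OComp.const (b : β) : OComp O (fun _ : α => b) := .of_primrec (Primrec.const b)

theorem OComp.nat_iff {f : ℕ → ℕ} : OComp O f ↔ RecIn O (fnOracle f) := by
  constructor
  · rintro ⟨F, hF, h⟩
    have : F = f := funext fun n => by simpa using h n
    exact this ▸ hF
  · intro h
    exact ⟨f, h, fun a => rfl⟩

theorem OComp.nat_rec {f : α → β} {h : α × ℕ × β → β} (hf : OComp O f) (hh : OComp O h) :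
    OComp O (fun p : α × ℕ => (Nat.rec (f p.1) (fun y IH => h (p.1, y, IH)) p.2 : β)) := by
  obtain ⟨F, hF, hF'⟩ := hf
  obtain ⟨G, hG, hG'⟩ := hh
  refine ⟨_, recIn_prec hF hG, fun ⟨a, n⟩ => ?_⟩
  simp only [encode_prod_val, Nat.unpaired, Nat.unpair_pair, encode_nat]
  induction n with
  | zero => exact hF' a
  | succ k ih =>
    simp only [ih]
    exact hG' (a, k, _)

theorem OPred.of_primrec {p : α → Prop} (hp : PrimrecPred p) : OPred O p := by
  obtain ⟨_, h⟩ := hp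
  exact (OComp.of_primrec h).of_eq fun a => by congr

theorem OPred.of_iff {p q : α → Prop} (hp : OPred O p) (h : ∀ a, p a ↔ q a) : OPred O q :=
  (funext fun a => propext (h a) : p = q) ▸ hp

theorem OPred.comp {p : β → Prop} {g : α → β} (hp : OPred O p) (hg : OComp O g) :
    OPred O fun a => p (g a) := OComp.comp (f := fun b => decide (p b)) hp hg

theorem OPred.not {p : α → Prop} (hp : OPred O p) : OPred O fun a => ¬ p a :=
  ((OComp.of_primrec Primrec.not).comp hp).of_eq fun a => by simp

theorem OPred.and {p q : α → Prop} (hp : OPred O p) (hq : OPred O q) :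
    OPred O fun a => p a ∧ q a :=
  (OComp.prim₂ Primrec.and hp hq).of_eq fun a => by simp

theorem OPred.or {p q : α → Prop} (hp : OPred O p) (hq : OPred O q) :
    OPred O fun a => p a ∨ q a :=
  (OComp.prim₂ Primrec.or hp hq).of_eq fun a => by simp

theorem OPred.rel {R : β → γ → Prop} (hR : PrimrecRel R) {f : α → β} {g : α → γ}
    (hf : OComp O f) (hg : OComp O g) : OPred O fun a => R (f a) (g a) :=
  (OPred.of_primrec (O := O) hR).comp (hf.pair hg)

theorem OComp.ite {p : α → Prop} {f g : α → β} (hp : OPred O p) (hf : OComp O f)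
    (hg : OComp O g) : OComp O fun a => if p a then f a else g a := by
  have h : Primrec fun x : Bool × β × β => bif x.1 then x.2.1 else x.2.2 :=
    Primrec.cond Primrec.fst (Primrec.fst.comp Primrec.snd) (Primrec.snd.comp Primrec.snd)
  refine ((OComp.of_primrec h).comp (OComp.pair hp (hf.pair hg))).of_eq fun a => ?_
  by_cases h : p a <;> simp [h]

theorem OComp.sum {g : α × ℕ → ℕ} (hg : OComp O g) :
    OComp O (fun p : α × ℕ => ∑ i ∈ Finset.range p.2, g (p.1, i)) := by
  have h : OComp O (fun q : α × ℕ × ℕ => q.2.2 + g (q.1, q.2.1)) :=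
    OComp.prim₂ Primrec.nat_add (OComp.snd.comp OComp.snd)
      (hg.comp (OComp.fst.pair (OComp.fst.comp OComp.snd)))
  refine (OComp.nat_rec (OComp.const 0) h).of_eq fun ⟨a, n⟩ => ?_
  induction n with
  | zero => rfl
  | succ k ih => rw [Finset.sum_range_succ, ← ih]

theorem OComp.listRange {g : α × ℕ → β} (hg : OComp O g) :
    OComp O (fun p : α × ℕ => (List.range p.2).map fun i => g (p.1, i)) := by
  have h : OComp O (fun q : α × ℕ × List β => q.2.2 ++ [g (q.1, q.2.1)]) :=
    OComp.prim₂ Primrec.list_concat (OComp.snd.comp OComp.snd)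
      (hg.comp (OComp.fst.pair (OComp.fst.comp OComp.snd)))
  refine (OComp.nat_rec (OComp.const []) h).of_eq fun ⟨a, n⟩ => ?_
  induction n with
  | zero => rfl
  | succ k ih =>
    rw [List.range_succ, List.map_append, ← ih]
    rfl

/-- A decidable predicate on pairs has a characteristic function on codes, with `0` for truth,
as a search expects. It is constantly `0` at first components that code nothing, so that the
search terminates there as well. -/
theorem OPred.exists_char {p : α × ℕ → Prop} (hp : OPred O p) :
    ∃ F : ℕ → ℕ, RecIn O (fnOracle F) ∧ (∀ a n, F (Nat.pair (encode a) n) = 0 ↔ p (a, n)) ∧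
      ∀ x n, decode₂ α x = none → F (Nat.pair x n) = 0 := by
  obtain ⟨G, hG, hG'⟩ := hp
  have hq : OPred O (fun x : ℕ => decode₂ α x.unpair.1 = none ∨ G x = 1) := by
    refine OPred.or ?_ ?_
    · have : PrimrecPred (fun o : Option α => o = none) :=
        Primrec.eq.comp Primrec.id (Primrec.const none)
      exact (OPred.of_primrec this).comp
        (.of_primrec (Primrec.decode₂.comp (Primrec.fst.comp Primrec.unpair)))
    · exact OPred.rel Primrec.eq (OComp.nat_iff.2 hG) (OComp.const 1)
  refine ⟨_, OComp.nat_iff.1 (OComp.ite hq (OComp.const 0) (OComp.const 1)), ?_, ?_⟩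
  · intro a n
    have := hG' (a, n)
    simp only [encode_prod_val, encode_nat] at this
    by_cases h : p (a, n) <;> simp [this, h]
  · intro x n h
    simp [h]

/-- Unbounded search relative to an oracle. -/
theorem OPred.search {p : α × ℕ → Prop} (hp : OPred O p) (H : ∀ a, ∃ n, p (a, n)) :
    OComp O fun a => Nat.find (H a) := by
  obtain ⟨F, hF, h1, h2⟩ := hp.exists_char
  have HF : ∀ x, ∃ n, F (Nat.pair x n) = 0 := by
    intro x
    cases hx : decode₂ α x with
    | none => exact ⟨0, h2 x 0 hx⟩
    | some a =>
      obtain ⟨n, hn⟩ := H a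
      rw [decode₂_eq_some] at hx
      exact ⟨n, hx ▸ (h1 a n).2 hn⟩
  refine ⟨_, recIn_find hF HF, fun a => ?_⟩
  simp only [encode_nat]
  congr 1
  ext n
  exact h1 a n

end

/-! ### Computation records -/

section

/-- An assertion `(c, n, v)`: the code numbered `c` on input `n` yields `v`. -/
abbrev Entry := ℕ × ℕ × ℕ

/-- The assertion `x` follows from the assertions in `w` by one evaluation rule. Assertions
about the oracle code are always accepted here; they are checked separately. -/
def Just (x : Entry) (w : List Entry) : Prop :=
  (x.1 = Nat.pair 0 0 ∧ x.2.2 = 0) ∨ (x.1 = Nat.pair 1 0 ∧ x.2.2 = x.2.1 + 1) ∨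
  (x.1 = Nat.pair 2 0 ∧ x.2.2 = x.2.1.unpair.1) ∨ (x.1 = Nat.pair 3 0 ∧ x.2.2 = x.2.1.unpair.2) ∨
  x.1 = Nat.pair 4 0 ∨
  (x.1.unpair.1 = 5 ∧ (x.1.unpair.2.unpair.1, x.2.1, x.2.2.unpair.1) ∈ w ∧
    (x.1.unpair.2.unpair.2, x.2.1, x.2.2.unpair.2) ∈ w) ∨
  (x.1.unpair.1 = 6 ∧ ∃ y ∈ w, y.1 = x.1.unpair.2.unpair.2 ∧ y.2.1 = x.2.1 ∧
    (x.1.unpair.2.unpair.1, y.2.2, x.2.2) ∈ w) ∨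
  (x.1.unpair.1 = 7 ∧ x.2.1.unpair.2 = 0 ∧ (x.1.unpair.2.unpair.1, x.2.1.unpair.1, x.2.2) ∈ w) ∨
  (x.1.unpair.1 = 7 ∧ x.2.1.unpair.2 ≠ 0 ∧ ∃ y ∈ w, y.1 = x.1 ∧
    y.2.1 = Nat.pair x.2.1.unpair.1 (x.2.1.unpair.2 - 1) ∧
    (x.1.unpair.2.unpair.2,
      Nat.pair x.2.1.unpair.1 (Nat.pair (x.2.1.unpair.2 - 1) y.2.2), x.2.2) ∈ w) ∨
  (x.1.unpair.1 = 8 ∧ (x.1.unpair.2, Nat.pair x.2.1 x.2.2, 0) ∈ w ∧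
    ∀ j < x.2.2, ∃ y ∈ w, y.1 = x.1.unpair.2 ∧ y.2.1 = Nat.pair x.2.1 j ∧ y.2.2 ≠ 0)

theorem Just.mono {x : Entry} {w w' : List Entry} (h : ∀ y ∈ w, y ∈ w') (hx : Just x w) :
    Just x w' := by
  unfold Just at hx ⊢
  rcases hx with hx | hx | hx | hx | hx | ⟨h1, h2, h3⟩ | ⟨h1, y, hy, h2, h3, h4⟩ |
    ⟨h1, h2, h3⟩ | ⟨h1, h2, y, hy, h3, h4, h5⟩ | ⟨h1, h2, h3⟩
  · tauto
  · tauto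
  · tauto
  · tauto
  · tauto
  · exact .inr <| .inr <| .inr <| .inr <| .inr <| .inl ⟨h1, h _ h2, h _ h3⟩
  · exact .inr <| .inr <| .inr <| .inr <| .inr <| .inr <| .inl ⟨h1, y, h _ hy, h2, h3, h _ h4⟩
  · exact .inr <| .inr <| .inr <| .inr <| .inr <| .inr <| .inr <| .inl ⟨h1, h2, h _ h3⟩
  · exact .inr <| .inr <| .inr <| .inr <| .inr <| .inr <| .inr <| .inr <| .inl
      ⟨h1, h2, y, h _ hy, h3, h4, h _ h5⟩
  · refine .inr <| .inr <| .inr <| .inr <| .inr <| .inr <| .inr <| .inr <| .inr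
      ⟨h1, h _ h2, fun j hj => ?_⟩
    obtain ⟨y, hy, h4⟩ := h3 j hj
    exact ⟨y, h _ hy, h4⟩

/-- `w` is a computation record: every entry is justified by the entries after it. -/
def validB : List Entry → Bool
  | [] => true
  | x :: w => decide (Just x w) && validB w

/-- `w` is a computation record whose oracle entries agree with `o`. -/
def Good (o : ℕ → ℕ) (w : List Entry) : Prop :=
  validB w = true ∧ ∀ x ∈ w, x.1 = Nat.pair 4 0 → x.2.2 = o x.2.1

theorem validB_append {w w' : List Entry} (h : validB w = true) (h' : validB w' = true) :
    validB (w ++ w') = true := by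
  induction w with
  | nil => exact h'
  | cons x w ih =>
    simp only [validB, List.cons_append, Bool.and_eq_true, decide_eq_true_eq] at h ⊢
    exact ⟨h.1.mono fun y hy => List.mem_append_left _ hy, ih h.2⟩

variable {o : ℕ → ℕ}

theorem Good.append {w w' : List Entry} (h : Good o w) (h' : Good o w') : Good o (w ++ w') := by
  refine ⟨validB_append h.1 h'.1, fun x hx => ?_⟩
  rcases List.mem_append.1 hx with hx | hx
  · exact h.2 x hx
  · exact h'.2 x hx

theorem Good.cons {x : Entry} {w : List Entry} (h : Good o w) (hx : Just x w)
    (h4 : x.1 = Nat.pair 4 0 → x.2.2 = o x.2.1) : Good o (x :: w) := by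
  refine ⟨by simp [validB, hx, h.1], fun y hy => ?_⟩
  rcases List.mem_cons.1 hy with rfl | hy
  · exact h4
  · exact h.2 y hy

/-- Every assertion in a computation record is true. -/
theorem Good.sound {w : List Entry} (h : Good o w) :
    ∀ x ∈ w, ∀ c : OCode, c.encodeC = x.1 → x.2.2 ∈ c.eval (fnOracle o) x.2.1 := by
  induction w with
  | nil => simp
  | cons x w ih =>
    have hv := h.1
    simp only [validB, Bool.and_eq_true, decide_eq_true_eq] at hv
    obtain ⟨hj, hw⟩ := hv
    have ih := ih ⟨hw, fun y hy => h.2 y (List.mem_cons_of_mem _ hy)⟩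
    have h4 := h.2 x (List.mem_cons_self)
    intro y hy
    rcases List.mem_cons.1 hy with rfl | hy
    swap
    · exact ih y hy
    intro c hc
    obtain ⟨z, n, v⟩ := y
    simp only at hc h4 ⊢
    subst hc
    cases c with
    | zero =>
      simp [Just, OCode.encodeC] at hj
      simp [OCode.eval, hj]
      exact Part.mem_some _
    | succ =>
      simp [Just, OCode.encodeC] at hj
      simp [OCode.eval, hj]
    | left =>
      simp [Just, OCode.encodeC] at hj
      simp [OCode.eval, hj]
    | right =>
      simp [Just, OCode.encodeC] at hj
      simp [OCode.eval, hj]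
    | oracle =>
      simp [OCode.eval, fnOracle, h4 rfl]
    | pair a b =>
      simp [Just, OCode.encodeC] at hj
      have ha := ih _ hj.1 a rfl
      have hb := ih _ hj.2 b rfl
      simp only [OCode.eval, Seq.seq, Part.map_eq_map, Part.mem_bind_iff, Part.mem_map_iff]
      exact ⟨_, ⟨_, ha, rfl⟩, _, hb, by simp⟩
    | comp a b =>
      simp [Just, OCode.encodeC] at hj
      obtain ⟨m, hb, ha⟩ := hj
      exact Part.mem_bind (ih _ hb b rfl) (ih _ ha a rfl)
    | prec a b =>
      simp [Just, OCode.encodeC] at hj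
      rcases hj with ⟨h0, ha⟩ | ⟨h0, m, hm, hb⟩
      · have := ih _ ha a rfl
        simpa [OCode.eval, Nat.unpaired, h0] using this
      · have h1 := ih _ hm (.prec a b) rfl
        have h2 := ih _ hb b rfl
        obtain ⟨k, hk⟩ := Nat.exists_eq_succ_of_ne_zero h0
        simp only [OCode.eval, Nat.unpaired, hk, Nat.unpair_pair] at h1 h2 ⊢
        exact Part.mem_bind h1 h2
    | rfind' a =>
      simp [Just, OCode.encodeC] at hj
      obtain ⟨h0, hlt⟩ := hj
      refine Nat.mem_rfind.2 ⟨?_, fun {m} hm => ?_⟩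
      · exact (Part.mem_map_iff _).2 ⟨0, ih _ h0 a rfl, by simp⟩
      · obtain ⟨y, hy, h0⟩ := hlt m hm
        exact (Part.mem_map_iff _).2 ⟨y, ih _ hy a rfl, by simp [h0]⟩

/-- Finitely many computation records can be merged into one. -/
theorem Good.collect {P : ℕ → List Entry → Prop}
    (hP : ∀ j w w', (∀ y ∈ w, y ∈ w') → P j w → P j w') (v : ℕ)
    (h : ∀ j < v, ∃ w, Good o w ∧ P j w) : ∃ w, Good o w ∧ ∀ j < v, P j w := by
  induction v with
  | zero => exact ⟨[], ⟨rfl, by simp⟩, by simp⟩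
  | succ v ih =>
    obtain ⟨w, hw, hw'⟩ := ih fun j hj => h j (by omega)
    obtain ⟨u, hu, hu'⟩ := h v (by omega)
    refine ⟨w ++ u, hw.append hu, fun j hj => ?_⟩
    rcases Nat.lt_succ_iff_lt_or_eq.1 hj with hj | rfl
    · exact hP j _ _ (fun y hy => List.mem_append_left _ hy) (hw' j hj)
    · exact hP j _ _ (fun y hy => List.mem_append_right _ hy) hu'

/-- Every computation that halts has a computation record. -/
theorem Good.complete (c : OCode) : ∀ n v, v ∈ c.eval (fnOracle o) n →
    ∃ w, Good o w ∧ (c.encodeC, n, v) ∈ w := by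
  have hnil : Good o [] := ⟨rfl, by simp⟩
  induction c with
  | zero =>
    intro n v h
    have h : v = 0 := Part.mem_some_iff.1 h
    exact ⟨[_], hnil.cons (by simp [Just, OCode.encodeC, h]) (by simp [OCode.encodeC]),
      List.mem_cons_self⟩
  | succ =>
    intro n v h
    have h : v = n + 1 := Part.mem_some_iff.1 h
    exact ⟨[_], hnil.cons (by simp [Just, OCode.encodeC, h]) (by simp [OCode.encodeC]),
      List.mem_cons_self⟩
  | left =>
    intro n v h
    have h : v = n.unpair.1 := Part.mem_some_iff.1 h
    exact ⟨[_], hnil.cons (by simp [Just, OCode.encodeC, h]) (by simp [OCode.encodeC]),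
      List.mem_cons_self⟩
  | right =>
    intro n v h
    have h : v = n.unpair.2 := Part.mem_some_iff.1 h
    exact ⟨[_], hnil.cons (by simp [Just, OCode.encodeC, h]) (by simp [OCode.encodeC]),
      List.mem_cons_self⟩
  | oracle =>
    intro n v h
    have h : v = o n := Part.mem_some_iff.1 h
    exact ⟨[_], hnil.cons (by simp [Just, OCode.encodeC]) (by simp [h]),
      List.mem_cons_self⟩
  | pair a b iha ihb =>
    intro n v h
    simp only [OCode.eval, Seq.seq, Part.map_eq_map, Part.mem_bind_iff, Part.mem_map_iff] at h
    obtain ⟨_, ⟨x, hx, rfl⟩, y, hy, rfl⟩ := h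
    obtain ⟨w, hw, hwx⟩ := iha n x hx
    obtain ⟨u, hu, huy⟩ := ihb n y hy
    exact ⟨_ :: (w ++ u), (hw.append hu).cons (by simp [Just, OCode.encodeC, hwx, huy])
      (by simp [OCode.encodeC]), List.mem_cons_self⟩
  | comp a b iha ihb =>
    intro n v h
    obtain ⟨y, hy, hv⟩ := Part.mem_bind_iff.1 h
    obtain ⟨w, hw, hwx⟩ := iha y v hv
    obtain ⟨u, hu, huy⟩ := ihb n y hy
    exact ⟨_ :: (w ++ u), (hw.append hu).cons (by
      simp only [Just, OCode.encodeC, Nat.unpair_pair]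
      exact .inr <| .inr <| .inr <| .inr <| .inr <| .inr <| .inl
        ⟨trivial, _, List.mem_append_right _ huy, rfl, rfl, List.mem_append_left _ hwx⟩)
      (by simp [OCode.encodeC]), List.mem_cons_self⟩
  | prec a b iha ihb =>
    intro n
    obtain ⟨m, k, rfl⟩ : ∃ m k, n = Nat.pair m k := ⟨_, _, (Nat.pair_unpair n).symm⟩
    induction k with
    | zero =>
      intro v h
      obtain ⟨w, hw, hwx⟩ := iha m v (by simpa [OCode.eval] using h)
      exact ⟨_ :: w, hw.cons (by simp [Just, OCode.encodeC, hwx]) (by simp [OCode.encodeC]),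
        List.mem_cons_self⟩
    | succ k ihk =>
      intro v h
      simp only [OCode.eval, Nat.unpaired, Nat.unpair_pair] at h
      obtain ⟨y, hy, hv⟩ := Part.mem_bind_iff.1 h
      obtain ⟨w, hw, hwx⟩ := ihk y (by
        simp only [OCode.eval, Nat.unpaired, Nat.unpair_pair]; exact hy)
      obtain ⟨u, hu, huy⟩ := ihb _ _ hv
      exact ⟨_ :: (w ++ u), (hw.append hu).cons (by
        simp only [Just, OCode.encodeC, Nat.unpair_pair]
        exact .inr <| .inr <| .inr <| .inr <| .inr <| .inr <| .inr <| .inr <| .inl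
          ⟨trivial, by simp, _, List.mem_append_left _ hwx, rfl, rfl, List.mem_append_right _ huy⟩)
        (by simp [OCode.encodeC]), List.mem_cons_self⟩
  | rfind' a iha =>
    intro n v h
    obtain ⟨h0, hlt⟩ := Nat.mem_rfind.1 h
    obtain ⟨z, hz, hz0⟩ := (Part.mem_map_iff _).1 h0
    obtain rfl : z = 0 := by simpa using hz0
    obtain ⟨w, hw, hwx⟩ := iha _ _ hz
    obtain ⟨u, hu, huy⟩ := Good.collect (o := o)
      (P := fun j w => ∃ y ∈ w, y.1 = a.encodeC ∧ y.2.1 = Nat.pair n j ∧ y.2.2 ≠ 0)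
      (fun j w w' hww ⟨y, hy, hh⟩ => ⟨y, hww y hy, hh⟩) v (fun j hj => by
        obtain ⟨z, hz, hz0⟩ := (Part.mem_map_iff _).1 (hlt hj)
        obtain ⟨w, hw, hwx⟩ := iha _ _ hz
        exact ⟨w, hw, _, hwx, rfl, rfl, by simpa using hz0⟩)
    refine ⟨_ :: (w ++ u), (hw.append hu).cons ?_ (by simp [OCode.encodeC]), List.mem_cons_self⟩
    simp only [Just, OCode.encodeC, Nat.unpair_pair]
    refine .inr <| .inr <| .inr <| .inr <| .inr <| .inr <| .inr <| .inr <| .inr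
      ⟨trivial, List.mem_append_left _ hwx, fun j hj => ?_⟩
    obtain ⟨y, hy, hh⟩ := huy j hj
    exact ⟨y, List.mem_append_right _ hy, hh⟩

theorem encodeC_injective : Function.Injective OCode.encodeC := by
  intro a
  induction a with
  | zero => intro b; cases b <;> simp [OCode.encodeC]
  | succ => intro b; cases b <;> simp [OCode.encodeC]
  | left => intro b; cases b <;> simp [OCode.encodeC]
  | right => intro b; cases b <;> simp [OCode.encodeC]
  | oracle => intro b; cases b <;> simp [OCode.encodeC]
  | pair a a' h h' =>
    intro b; cases b <;> simp [OCode.encodeC]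
    exact fun h1 h2 => ⟨h h1, h' h2⟩
  | comp a a' h h' =>
    intro b; cases b <;> simp [OCode.encodeC]
    exact fun h1 h2 => ⟨h h1, h' h2⟩
  | prec a a' h h' =>
    intro b; cases b <;> simp [OCode.encodeC]
    exact fun h1 h2 => ⟨h h1, h' h2⟩
  | rfind' a h =>
    intro b; cases b <;> simp [OCode.encodeC]
    exact fun h1 => h h1

theorem phi_encodeC (O : ℕ →. ℕ) (c : OCode) : phi O c.encodeC = c.eval O := by
  have h : ∃ c' : OCode, c'.encodeC = c.encodeC := ⟨c, rfl⟩
  exact (dif_pos h).trans (congrArg (OCode.eval O) (encodeC_injective h.choose_spec))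

/-- `e` is the number of a code. -/
def IsCode (e : ℕ) : Prop := ∃ c : OCode, c.encodeC = e

/-- A computation halts exactly when some finite record witnesses that it does. -/
theorem phi_dom_iff (e n : ℕ) : (phi (fnOracle o) e n).Dom ↔
    IsCode e ∧ ∃ w, Good o w ∧ ∃ v, (e, n, v) ∈ w := by
  constructor
  · intro h
    by_cases he : IsCode e
    · obtain ⟨c, rfl⟩ := he
      rw [phi_encodeC, Part.dom_iff_mem] at h
      obtain ⟨v, hv⟩ := h
      obtain ⟨w, hw, hwv⟩ := Good.complete c n v hv
      exact ⟨⟨c, rfl⟩, w, hw, v, hwv⟩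
    · exact absurd h (by
        have h0 : phi (fnOracle o) e = fun _ => Part.none := dif_neg he
        rw [h0]; exact fun h => h)
  · rintro ⟨⟨c, rfl⟩, w, hw, v, hv⟩
    rw [phi_encodeC, Part.dom_iff_mem]
    exact ⟨v, hw.sound _ hv c rfl⟩

end

/-! ### Finite oracles and the jump -/

section

theorem primrecRel_mem {α : Type*} [Primcodable α] :
    PrimrecRel fun (a : α) (l : List α) => a ∈ l := by
  have h : PrimrecRel fun (l : List α) (a : α) => ∃ x ∈ l, x = a :=
    PrimrecRel.exists_mem_list Primrec.eq
  exact h.swap.of_eq fun a l => by simp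

theorem primrec_just : PrimrecRel Just := by
  have hx : Primrec fun p : Entry × List Entry => p.1 := Primrec.fst
  have hw : Primrec fun p : Entry × List Entry => p.2 := Primrec.snd
  have up1 : Primrec fun n : ℕ => n.unpair.1 := Primrec.fst.comp Primrec.unpair
  have up2 : Primrec fun n : ℕ => n.unpair.2 := Primrec.snd.comp Primrec.unpair
  have e1 : Primrec fun x : Entry => x.1 := Primrec.fst
  have e2 : Primrec fun x : Entry => x.2.1 := Primrec.fst.comp Primrec.snd
  have e3 : Primrec fun x : Entry => x.2.2 := Primrec.snd.comp Primrec.snd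
  have pr {α : Type} [Primcodable α] {f g : α → ℕ} (hf : Primrec f) (hg : Primrec g) :
      Primrec fun a => Nat.pair (f a) (g a) := Primrec₂.natPair.comp hf hg
  have eq {α : Type} [Primcodable α] {f g : α → ℕ} (hf : Primrec f) (hg : Primrec g) :
      PrimrecPred fun a => f a = g a := Primrec.eq.comp hf hg
  have mem {α : Type} [Primcodable α] {f g h : α → ℕ} {l : α → List Entry} (hf : Primrec f)
      (hg : Primrec g) (hh : Primrec h) (hl : Primrec l) :
      PrimrecPred fun a => (f a, g a, h a) ∈ l a :=
    primrecRel_mem.comp (hf.pair (hg.pair hh)) hl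
  -- bounded quantification over the members of the record
  have ex {α : Type} [Primcodable α] {R : Entry → α → Prop} {l : α → List Entry}
      (hR : PrimrecPred fun q : Entry × α => R q.1 q.2) (hl : Primrec l) :
      PrimrecPred fun a => ∃ y ∈ l a, R y a :=
    (PrimrecRel.exists_mem_list hR.primrecRel).comp hl Primrec.id
  have kc (k : ℕ) {α : Type} [Primcodable α] : Primrec fun _ : α => k := Primrec.const k
  have c1 := e1.comp hx
  have c2 := e2.comp hx
  have c3 := e3.comp hx
  have k1 := up1.comp c1
  have k2 := up2.comp c1
  have lift {β : Type} [Primcodable β] {f : Entry × List Entry → β} (hf : Primrec f) :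
      Primrec fun q : Entry × Entry × List Entry => f q.2 := hf.comp Primrec.snd
  have y1 : Primrec fun q : Entry × Entry × List Entry => q.1.1 := e1.comp Primrec.fst
  have y2 : Primrec fun q : Entry × Entry × List Entry => q.1.2.1 := e2.comp Primrec.fst
  have y3 : Primrec fun q : Entry × Entry × List Entry => q.1.2.2 := e3.comp Primrec.fst
  have lift' {β : Type} [Primcodable β] {f : Entry × List Entry → β} (hf : Primrec f) :
      Primrec fun q : Entry × ℕ × Entry × List Entry => f q.2.2 :=
    hf.comp (Primrec.snd.comp Primrec.snd)
  have z1 : Primrec fun q : Entry × ℕ × Entry × List Entry => q.1.1 := e1.comp Primrec.fst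
  have z2 : Primrec fun q : Entry × ℕ × Entry × List Entry => q.1.2.1 := e2.comp Primrec.fst
  have z3 : Primrec fun q : Entry × ℕ × Entry × List Entry => q.1.2.2 := e3.comp Primrec.fst
  have zj : Primrec fun q : Entry × ℕ × Entry × List Entry => q.2.1 :=
    Primrec.fst.comp Primrec.snd
  refine PrimrecPred.or ((eq c1 (kc _)).and (eq c3 (kc _))) ?_
  refine PrimrecPred.or ((eq c1 (kc _)).and (eq c3 (Primrec.succ.comp c2))) ?_
  refine PrimrecPred.or ((eq c1 (kc _)).and (eq c3 (up1.comp c2))) ?_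
  refine PrimrecPred.or ((eq c1 (kc _)).and (eq c3 (up2.comp c2))) ?_
  refine PrimrecPred.or (eq c1 (kc _)) ?_
  refine PrimrecPred.or ((eq k1 (kc _)).and ((mem (up1.comp k2) c2 (up1.comp c3) hw).and
    (mem (up2.comp k2) c2 (up2.comp c3) hw))) ?_
  refine PrimrecPred.or ((eq k1 (kc _)).and (ex
    (R := fun y p => y.1 = p.1.1.unpair.2.unpair.2 ∧ y.2.1 = p.1.2.1 ∧
      (p.1.1.unpair.2.unpair.1, y.2.2, p.1.2.2) ∈ p.2)
    ((eq y1 (lift (up2.comp k2))).and ((eq y2 (lift c2)).and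
      (mem (lift (up1.comp k2)) y3 (lift c3) (lift hw)))) hw)) ?_
  refine PrimrecPred.or ((eq k1 (kc _)).and ((eq (up2.comp c2) (kc _)).and
    (mem (up1.comp k2) (up1.comp c2) c3 hw))) ?_
  have pd := Primrec.pred.comp (up2.comp c2)
  refine PrimrecPred.or ((eq k1 (kc _)).and ((eq (up2.comp c2) (kc _)).not.and (ex
    (R := fun y p => y.1 = p.1.1 ∧
      y.2.1 = Nat.pair p.1.2.1.unpair.1 (p.1.2.1.unpair.2 - 1) ∧
      (p.1.1.unpair.2.unpair.2,
        Nat.pair p.1.2.1.unpair.1 (Nat.pair (p.1.2.1.unpair.2 - 1) y.2.2), p.1.2.2) ∈ p.2)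
    ((eq y1 (lift c1)).and ((eq y2 (lift (pr (up1.comp c2) pd))).and
      (mem (lift (up2.comp k2)) (pr (lift (up1.comp c2)) (pr (lift pd) y3)) (lift c3)
        (lift hw)))) hw))) ?_
  refine (eq k1 (kc _)).and ((mem k2 (pr c2 c3) (kc _) hw).and ?_)
  have hR : PrimrecRel fun (j : ℕ) (p : Entry × List Entry) =>
      ∃ y ∈ p.2, y.1 = p.1.1.unpair.2 ∧ y.2.1 = Nat.pair p.1.2.1 j ∧ y.2.2 ≠ 0 :=
    ex (α := ℕ × Entry × List Entry)
      (R := fun y p => y.1 = p.2.1.1.unpair.2 ∧ y.2.1 = Nat.pair p.2.1.2.1 p.1 ∧ y.2.2 ≠ 0)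
      ((eq z1 (lift' k2)).and ((eq z2 (pr (lift' c2) zj)).and (eq z3 (kc 0)).not))
      (hw.comp Primrec.snd)
  exact ((PrimrecRel.forall_mem_list hR).comp (Primrec.list_range.comp c3)
    Primrec.id).of_eq fun p => by simp only [List.mem_range]; rfl

theorem primrec_validB : Primrec validB := by
  have hj : Primrec₂ fun (x : Entry) (w : List Entry) => decide (Just x w) := by
    obtain ⟨_, h⟩ := primrec_just
    exact h.of_eq fun a => by congr
  have := Primrec.list_rec (f := fun w : List Entry => w) (g := fun _ => true)
    (h := fun _ p => decide (Just p.1 p.2.1) && p.2.2) Primrec.id (Primrec.const true)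
    (Primrec.and.comp
      (hj.comp (Primrec.fst.comp Primrec.snd) (Primrec.fst.comp (Primrec.snd.comp Primrec.snd)))
      (Primrec.snd.comp (Primrec.snd.comp Primrec.snd)))
  refine this.of_eq fun w => ?_
  induction w with
  | nil => rfl
  | cons x w ih => simp only [validB, ← ih]

/-- Being the number of a code, expressed through the smaller numbers, whose status `l` lists. -/
def isCodeStep (l : List Bool) : Prop :=
  (l.length.unpair.1 ≤ 4 ∧ l.length.unpair.2 = 0) ∨
  ((l.length.unpair.1 = 5 ∨ l.length.unpair.1 = 6 ∨ l.length.unpair.1 = 7) ∧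
    l.getD l.length.unpair.2.unpair.1 false = true ∧
    l.getD l.length.unpair.2.unpair.2 false = true) ∨
  (l.length.unpair.1 = 8 ∧ l.getD l.length.unpair.2 false = true)

/-- The recursion is well founded because the components of a compound code are numbered by
smaller numbers than the code itself. -/
theorem isCodeStep_iff (n : ℕ) :
    isCodeStep ((List.range n).map fun i => decide (IsCode i)) ↔ IsCode n := by
  obtain ⟨k, r, rfl⟩ : ∃ k r, n = Nat.pair k r := ⟨_, _, (Nat.pair_unpair n).symm⟩
  have hle := Nat.add_le_pair k r
  have hl := Nat.unpair_left_le r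
  have hr := Nat.unpair_right_le r
  have key : ∀ i, (((List.range (Nat.pair k r)).map fun i => decide (IsCode i)).getD i false
      = true) ↔ i < Nat.pair k r ∧ IsCode i := by
    intro i
    by_cases hi : i < Nat.pair k r
    · simp [List.getD, hi]
    · simp [List.getD, hi]
  simp only [isCodeStep, key, List.length_map, List.length_range, Nat.unpair_pair]
  constructor
  · rintro (⟨h1, rfl⟩ | ⟨h1, ⟨_, a, ha⟩, _, b, hb⟩ | ⟨rfl, _, a, ha⟩)
    · interval_cases k
      exacts [⟨.zero, rfl⟩, ⟨.succ, rfl⟩, ⟨.left, rfl⟩, ⟨.right, rfl⟩, ⟨.oracle, rfl⟩]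
    · rcases h1 with rfl | rfl | rfl
      · exact ⟨.pair a b, by simp [OCode.encodeC, ha, hb]⟩
      · exact ⟨.comp a b, by simp [OCode.encodeC, ha, hb]⟩
      · exact ⟨.prec a b, by simp [OCode.encodeC, ha, hb]⟩
    · exact ⟨.rfind' a, by simp [OCode.encodeC, ha]⟩
  · rintro ⟨c, hc⟩
    cases c <;> simp only [OCode.encodeC, Nat.pair_eq_pair] at hc <;> obtain ⟨rfl, rfl⟩ := hc
    · simp
    · simp
    · simp
    · simp
    · simp
    · rename_i a b
      refine .inr (.inl ⟨by simp, ⟨by omega, ?_⟩, ⟨by omega, ?_⟩⟩)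
      · exact ⟨a, by simp⟩
      · exact ⟨b, by simp⟩
    · rename_i a b
      refine .inr (.inl ⟨by simp, ⟨by omega, ?_⟩, ⟨by omega, ?_⟩⟩)
      · exact ⟨a, by simp⟩
      · exact ⟨b, by simp⟩
    · rename_i a b
      refine .inr (.inl ⟨by simp, ⟨by omega, ?_⟩, ⟨by omega, ?_⟩⟩)
      · exact ⟨a, by simp⟩
      · exact ⟨b, by simp⟩
    · rename_i a
      exact .inr (.inr ⟨rfl, by omega, a, rfl⟩)

theorem primrec_isCode : PrimrecPred IsCode := by
  have hstep : PrimrecPred isCodeStep := by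
    have hl : Primrec (fun l : List Bool => l.length) := Primrec.list_length
    have h1 : Primrec (fun l : List Bool => l.length.unpair.1) :=
      Primrec.fst.comp (Primrec.unpair.comp hl)
    have h2 : Primrec (fun l : List Bool => l.length.unpair.2) :=
      Primrec.snd.comp (Primrec.unpair.comp hl)
    have g {f : List Bool → ℕ} (hf : Primrec f) :
        PrimrecPred fun l : List Bool => l.getD (f l) false = true :=
      Primrec.eq.comp ((Primrec.list_getD false).comp Primrec.id hf) (Primrec.const true)
    have e {f : List Bool → ℕ} (hf : Primrec f) (k : ℕ) :
        PrimrecPred fun l : List Bool => f l = k := Primrec.eq.comp hf (Primrec.const k)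
    exact ((Primrec.nat_le.comp h1 (Primrec.const 4)).and (e h2 0)).or
      ((((e h1 5).or ((e h1 6).or (e h1 7))).and
        ((g (Primrec.fst.comp (Primrec.unpair.comp h2))).and
          (g (Primrec.snd.comp (Primrec.unpair.comp h2))))).or ((e h1 8).and (g h2)))
  obtain ⟨_, hs⟩ := hstep
  have h : Primrec₂ fun (_ : Unit) (n : ℕ) => decide (IsCode n) := by
    refine Primrec.nat_strong_rec _ (g := fun _ l => some (decide (isCodeStep l))) ?_ ?_
    · exact Primrec.option_some.comp ((hs.of_eq fun a => by congr).comp Primrec.snd)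
    · intro _ n
      simp only [isCodeStep_iff]
  exact ⟨inferInstance, (h.comp (Primrec.const ()) Primrec.id).of_eq fun a => by congr⟩

/-- The answer to the query `q` given by the finite join `σ ⊕ ξ`, if it is long enough. -/
def lookup (σ ξ : List Bool) (q : ℕ) : Option ℕ :=
  ((if q % 2 = 0 then σ else ξ)[q / 2]?).map fun b => if b then 1 else 0

/-- The `e`-th program halts on input `e` with oracle `σ ⊕ ξ`, by a computation record coded
below `|σ|`. A number that codes no record is read as the empty record, which asserts nothing. -/
def Conv (e : ℕ) (σ ξ : List Bool) : Prop :=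
  IsCode e ∧ ∃ u < σ.length, validB ((decode (α := List Entry) u).getD []) = true ∧
    (∀ x ∈ (decode (α := List Entry) u).getD [], x.1 = Nat.pair 4 0 →
      lookup σ ξ x.2.1 = some x.2.2) ∧
    ∃ x ∈ (decode (α := List Entry) u).getD [], x.1 = e ∧ x.2.1 = e

theorem primrec_conv : PrimrecPred fun p : ℕ × List Bool × List Bool => Conv p.1 p.2.1 p.2.2 := by
  have hlook : Primrec fun p : (List Bool × List Bool) × ℕ => lookup p.1.1 p.1.2 p.2 := by
    have hc : PrimrecPred fun p : (List Bool × List Bool) × ℕ => p.2 % 2 = 0 :=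
      Primrec.eq.comp (Primrec.nat_mod.comp Primrec.snd (Primrec.const 2)) (Primrec.const 0)
    have := Primrec.list_getElem?.comp
      (Primrec.ite hc (Primrec.fst.comp Primrec.fst) (Primrec.snd.comp Primrec.fst))
      (Primrec.nat_div.comp Primrec.snd (Primrec.const 2))
    exact (Primrec.option_map₁ (Primrec.dom_bool fun b => if b = true then 1 else 0)).comp this
  have dec : Primrec fun u : ℕ => (decode (α := List Entry) u).getD [] :=
    Primrec.option_getD.comp Primrec.decode (Primrec.const [])
  have hd : Primrec fun q : ℕ × ℕ × List Bool × List Bool =>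
      (decode (α := List Entry) q.1).getD [] := dec.comp Primrec.fst
  have hall : PrimrecRel fun (x : Entry) (q : ℕ × ℕ × List Bool × List Bool) =>
      x.1 = Nat.pair 4 0 → lookup q.2.2.1 q.2.2.2 x.2.1 = some x.2.2 := by
    have h1 : PrimrecPred fun p : Entry × ℕ × ℕ × List Bool × List Bool =>
        p.1.1 = Nat.pair 4 0 :=
      Primrec.eq.comp (Primrec.fst.comp Primrec.fst) (Primrec.const _)
    have h2 : PrimrecPred fun p : Entry × ℕ × ℕ × List Bool × List Bool =>
        lookup p.2.2.2.1 p.2.2.2.2 p.1.2.1 = some p.1.2.2 :=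
      Primrec.eq.comp (hlook.comp
        ((Primrec.snd.comp (Primrec.snd.comp Primrec.snd)).pair
          (Primrec.fst.comp (Primrec.snd.comp Primrec.fst))))
        (Primrec.option_some.comp (Primrec.snd.comp (Primrec.snd.comp Primrec.fst)))
    exact PrimrecPred.of_eq (h1.not.or h2) fun p => by simp only [imp_iff_not_or]
  have hex : PrimrecRel fun (x : Entry) (q : ℕ × ℕ × List Bool × List Bool) =>
      x.1 = q.2.1 ∧ x.2.1 = q.2.1 := by
    have he : Primrec fun p : Entry × ℕ × ℕ × List Bool × List Bool => p.2.2.1 :=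
      Primrec.fst.comp (Primrec.snd.comp Primrec.snd)
    exact (Primrec.eq.comp (Primrec.fst.comp Primrec.fst) he).and
      (Primrec.eq.comp (Primrec.fst.comp (Primrec.snd.comp Primrec.fst)) he)
  have hbody : PrimrecRel fun (u : ℕ) (p : ℕ × List Bool × List Bool) =>
      validB ((decode (α := List Entry) u).getD []) = true ∧
      (∀ x ∈ (decode (α := List Entry) u).getD [], x.1 = Nat.pair 4 0 →
        lookup p.2.1 p.2.2 x.2.1 = some x.2.2) ∧
      ∃ x ∈ (decode (α := List Entry) u).getD [], x.1 = p.1 ∧ x.2.1 = p.1 :=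
    (Primrec.eq.comp (primrec_validB.comp hd) (Primrec.const true)).and
      (((PrimrecRel.forall_mem_list hall).comp hd Primrec.id).and
        ((PrimrecRel.exists_mem_list hex).comp hd Primrec.id))
  have hbd := (PrimrecRel.exists_mem_list hbody).comp (Primrec.list_range.comp
    (Primrec.list_length.comp (Primrec.fst.comp (Primrec.snd (α := ℕ))))) Primrec.id
  exact (primrec_isCode.comp Primrec.fst).and
    (hbd.of_eq fun p => by simp only [List.mem_range, id])

/-- A code for the constant function with value `n`. -/
def constCode : ℕ → OCode
  | 0 => .zero
  | n + 1 => .comp .succ (constCode n)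

theorem constCode_eval (O : ℕ →. ℕ) (n m : ℕ) : (constCode n).eval O m = Part.some n := by
  induction n with
  | zero => rfl
  | succ n ih =>
    simp only [constCode, OCode.eval, ih]
    exact Part.bind_some _ _

theorem primrec_constCode : Primrec fun n => (constCode n).encodeC := by
  have h : Primrec₂ fun (_ : ℕ) (y : ℕ) => Nat.pair 6 (Nat.pair (Nat.pair 1 0) y) :=
    Primrec₂.natPair.comp (Primrec.const 6)
      (Primrec₂.natPair.comp (Primrec.const _) Primrec.snd)
  refine (Primrec.nat_rec₁ (Nat.pair 0 0) h).of_eq fun n => ?_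
  induction n with
  | zero => rfl
  | succ n ih => simp only [constCode, OCode.encodeC, ih]

theorem chOracle_eq (X : Set ℕ) : chOracle X = fnOracle fun n => if n ∈ X then 1 else 0 := rfl

variable {α : Type*} [Primcodable α] {X : Set ℕ}

theorem OPred.mem_self (X : Set ℕ) : OPred (chOracle X) fun n : ℕ => n ∈ X := by
  have h : OComp (chOracle X) fun n : ℕ => if n ∈ X then 1 else 0 :=
    OComp.nat_iff.2 (recIn_oracle _)
  refine (OPred.rel Primrec.eq h (OComp.const 1)).of_iff fun n => ?_
  by_cases hn : n ∈ X <;> simp [hn]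

/-- The jump of `X` decides every predicate that is `Σ⁰₁` in `X`: whether the search for a
witness for `a` halts is a diagonal halting question about the program that searches for that
`a` whatever its input. -/
theorem OPred.exists_jump {p : α × ℕ → Prop} (hp : OPred (chOracle X) p) :
    OPred (chOracle (jumpSet X)) fun a => ∃ n, p (a, n) := by
  obtain ⟨F, ⟨c, hc⟩, h1, -⟩ := hp.exists_char
  have hs : Primrec fun a : α =>
      (OCode.comp (.rfind' c) (constCode (encode a))).encodeC :=
    Primrec₂.natPair.comp (Primrec.const 6) (Primrec₂.natPair.comp (Primrec.const _)
      (primrec_constCode.comp Primrec.encode))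
  refine ((OPred.mem_self (jumpSet X)).comp (.of_primrec hs)).of_iff fun a => ?_
  simp only [jumpSet, Set.mem_ofPred_eq, phi_encodeC, OCode.eval, constCode_eval, hc]
  refine (iff_of_eq (congrArg Part.Dom (Part.bind_some (encode a) _))).trans
    (Nat.rfind_dom.trans ⟨?_, ?_⟩)
  · rintro ⟨n, hn, -⟩
    refine ⟨n, (h1 a n).1 ?_⟩
    simpa [fnOracle] using hn
  · rintro ⟨n, hn⟩
    refine ⟨n, ?_, fun _ => trivial⟩
    simp [fnOracle, (h1 a n).2 hn]

theorem OPred.to_jump {p : α → Prop} (hp : OPred (chOracle X) p) :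
    OPred (chOracle (jumpSet X)) p :=
  (OPred.exists_jump (hp.comp (OComp.fst (β := ℕ)))).of_iff fun _ => by simp

end

/-! ### Clopen sets and the method of conditional expectations -/

section

/-- The `i`-th binary string of length `d`: the digits of `i`, least significant first. -/
def bits (d i : ℕ) : List Bool := (List.range d).map fun j => decide (i / 2 ^ j % 2 = 1)

theorem bits_length (d i : ℕ) : (bits d i).length = d := by simp [bits]

theorem bits_succ (d i : ℕ) : bits (d + 1) i = decide (i % 2 = 1) :: bits d (i / 2) := by
  simp only [bits, List.range_succ_eq_map, List.map_cons, List.map_map, pow_zero, Nat.div_one]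
  congr 2
  ext j
  simp only [Function.comp, pow_succ', Nat.div_div_eq_div_mul]

theorem primrec_bits : Primrec₂ bits := by
  have hpow : Primrec₂ fun a b : ℕ => a ^ b := Primrec₂.unpaired'.1 Nat.Primrec.pow
  have h : Primrec₂ fun (p : ℕ × ℕ) (j : ℕ) => decide (p.2 / 2 ^ j % 2 = 1) :=
    (Primrec.eq.comp (Primrec.nat_mod.comp (Primrec.nat_div.comp
      (Primrec.snd.comp Primrec.fst) (hpow.comp (Primrec.const 2) Primrec.snd))
      (Primrec.const 2)) (Primrec.const 1)).decide
  exact (Primrec.list_map (Primrec.list_range.comp Primrec.fst) h).of_eq fun p => by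
    simp [bits]

/-- The sum of `F` over the extensions of `σ` by `d` bits. -/
def extSum (d : ℕ) (F : List Bool → ℕ) (σ : List Bool) : ℕ :=
  ∑ i ∈ Finset.range (2 ^ d), F (σ ++ bits d i)

theorem sum_range_two_mul (g : ℕ → ℕ) (n : ℕ) :
    ∑ i ∈ Finset.range (2 * n), g i = ∑ i ∈ Finset.range n, (g (2 * i) + g (2 * i + 1)) := by
  induction n with
  | zero => simp
  | succ n ih =>
    rw [Nat.mul_succ, Finset.sum_range_succ, Finset.sum_range_succ, ih, Finset.sum_range_succ,
      add_assoc]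

theorem extSum_zero (F : List Bool → ℕ) (σ : List Bool) : extSum 0 F σ = F σ := by
  simp [extSum, bits]

theorem extSum_succ (d : ℕ) (F : List Bool → ℕ) (σ : List Bool) :
    extSum (d + 1) F σ = extSum d F (σ ++ [false]) + extSum d F (σ ++ [true]) := by
  simp only [extSum, pow_succ', sum_range_two_mul, Finset.sum_add_distrib, bits_succ]
  congr 1
  · exact Finset.sum_congr rfl fun i _ => by simp
  · refine Finset.sum_congr rfl fun i _ => ?_
    have h1 : (2 * i + 1) % 2 = 1 := by omega
    have h2 : (2 * i + 1) / 2 = i := by omega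
    simp [h1, h2]

theorem extSum_le {d : ℕ} {F G : List Bool → ℕ} {σ : List Bool}
    (h : ∀ τ, τ.length = σ.length + d → F τ ≤ G τ) : extSum d F σ ≤ extSum d G σ :=
  Finset.sum_le_sum fun i _ => h _ (by simp [bits_length])

theorem extSum_congr {d : ℕ} {F G : List Bool → ℕ} {σ : List Bool}
    (h : ∀ τ, τ.length = σ.length + d → F τ = G τ) : extSum d F σ = extSum d G σ :=
  Finset.sum_congr rfl fun i _ => h _ (by simp [bits_length])

theorem extSum_add (d : ℕ) (F G : List Bool → ℕ) (σ : List Bool) :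
    extSum d (fun τ => F τ + G τ) σ = extSum d F σ + extSum d G σ := by
  simp [extSum, Finset.sum_add_distrib]

theorem extSum_one (d : ℕ) (σ : List Bool) : extSum d (fun _ => 1) σ = 2 ^ d := by
  simp [extSum]

/-- A function that depends only on the first `ℓ` bits has the same average on all levels from
`ℓ` on. -/
theorem extSum_stable {ℓ : ℕ} {F : List Bool → ℕ}
    (hF : ∀ τ b, ℓ ≤ τ.length → F (τ ++ [b]) = F τ) (d k : ℕ) :
    ∀ σ : List Bool, ℓ ≤ σ.length + d → extSum (d + k) F σ = 2 ^ k * extSum d F σ := by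
  have h1 : ∀ (d : ℕ) (σ : List Bool), ℓ ≤ σ.length + d →
      extSum (d + 1) F σ = 2 * extSum d F σ := by
    intro d
    induction d with
    | zero =>
      intro σ h
      rw [extSum_succ, extSum_zero, extSum_zero, extSum_zero, hF _ _ h, hF _ _ h, two_mul]
    | succ d ih =>
      intro σ h
      rw [extSum_succ (d + 1), ih (σ ++ [false]) (by simp; omega),
        ih (σ ++ [true]) (by simp; omega), extSum_succ d F σ, mul_add]
  intro σ h
  induction k with
  | zero => simp
  | succ k ih => rw [← add_assoc, h1 _ _ (by omega), ih, pow_succ']; ring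

/-- The indicator of a set of strings. -/
def ind (V : List Bool → Prop) (τ : List Bool) : ℕ := if V τ then 1 else 0

/-- Membership in the set `V` of strings is decided by the first `ℓ` bits, so that `V`
represents a clopen subset of Cantor space. -/
def Stable (ℓ : ℕ) (V : List Bool → Prop) : Prop := ∀ τ b, ℓ ≤ τ.length → (V (τ ++ [b]) ↔ V τ)

/-- The conditional measure, within the cone above `σ`, of the clopen set that `V`
represents. -/
def dens (ℓ : ℕ) (V : List Bool → Prop) (σ : List Bool) : ℝ := extSum ℓ (ind V) σ / 2 ^ ℓ

section
variable {ℓ : ℕ} {V : List Bool → Prop}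

theorem Stable.ind (h : Stable ℓ V) (τ : List Bool) (b : Bool) (hτ : ℓ ≤ τ.length) :
    ind V (τ ++ [b]) = ind V τ := by
  simp only [LowBasis.ind, h τ b hτ]

theorem Stable.dens_eq (h : Stable ℓ V) {d : ℕ} (hd : ℓ ≤ d) (σ : List Bool) :
    dens ℓ V σ = extSum d (LowBasis.ind V) σ / 2 ^ d := by
  obtain ⟨k, rfl⟩ := Nat.exists_eq_add_of_le hd
  rw [extSum_stable h.ind ℓ k σ (by omega), dens, pow_add]
  push_cast
  field_simp

theorem Stable.dens_split (h : Stable ℓ V) (σ : List Bool) :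
    dens ℓ V σ = (dens ℓ V (σ ++ [false]) + dens ℓ V (σ ++ [true])) / 2 := by
  rw [h.dens_eq (Nat.le_succ ℓ), extSum_succ, dens, dens, pow_succ]
  push_cast
  field_simp

theorem dens_nonneg (σ : List Bool) : 0 ≤ dens ℓ V σ := by unfold dens; positivity

theorem Stable.dens_snoc_le (h : Stable ℓ V) (σ : List Bool) (b : Bool) :
    dens ℓ V (σ ++ [b]) ≤ 2 * dens ℓ V σ := by
  rw [h.dens_split σ]
  have h0 := dens_nonneg (ℓ := ℓ) (V := V) (σ ++ [false])
  have h1 := dens_nonneg (ℓ := ℓ) (V := V) (σ ++ [true])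
  cases b <;> linarith

theorem Stable.dens_le_pow (h : Stable ℓ V) (σ : List Bool) :
    dens ℓ V σ ≤ 2 ^ σ.length * dens ℓ V [] := by
  induction σ using List.reverseRecOn with
  | nil => simp
  | append_singleton σ b ih =>
    refine (h.dens_snoc_le σ b).trans ?_
    rw [List.length_append, List.length_singleton, pow_succ]
    linarith

theorem Stable.dens_eq_one (h : Stable ℓ V) {σ : List Bool} (hσ : ℓ ≤ σ.length) (hV : V σ) :
    dens ℓ V σ = 1 := by
  have := extSum_stable h.ind 0 ℓ σ (by omega)
  rw [zero_add, extSum_zero, LowBasis.ind, if_pos hV, mul_one] at this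
  rw [dens, this]
  push_cast
  field_simp

end

theorem OComp.pow {O : ℕ →. ℕ} {α : Type*} [Primcodable α] {f g : α → ℕ} (hf : OComp O f)
    (hg : OComp O g) : OComp O fun a => f a ^ g a :=
  OComp.prim₂ (Primrec₂.unpaired'.1 Nat.Primrec.pow) hf hg

theorem OComp.extSum {O : ℕ →. ℕ} {α : Type*} [Primcodable α] {F : α → List Bool → ℕ}
    {d : α → ℕ} {σ : α → List Bool} (hF : OComp O fun p : α × List Bool => F p.1 p.2)
    (hd : OComp O d) (hσ : OComp O σ) : OComp O fun a => extSum (d a) (F a) (σ a) := by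
  have h1 : OComp O fun p : α × ℕ => F p.1 (σ p.1 ++ bits (d p.1) p.2) :=
    hF.comp (OComp.fst.pair (OComp.prim₂ Primrec.list_append (hσ.comp OComp.fst)
      (OComp.prim₂ primrec_bits (hd.comp OComp.fst) OComp.snd)))
  exact (OComp.sum h1).comp (OComp.id.pair (OComp.pow (OComp.const 2) hd))

theorem OPred.ind {O : ℕ →. ℕ} {α : Type*} [Primcodable α] {V : α → List Bool → Prop}
    (hV : OPred O fun p : α × List Bool => V p.1 p.2) :
    OComp O fun p : α × List Bool => ind (V p.1) p.2 :=
  OComp.ite hV (OComp.const 1) (OComp.const 0)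

/-- Total weight, within the cone above `σ`, of the first `s` clopen sets, scaled by a common
power of two to be a natural number. -/
def weight (V : ℕ → List Bool → Prop) (ℓ : ℕ → ℕ) (s : ℕ) (σ : List Bool) : ℕ :=
  extSum (∑ i ∈ Finset.range s, ℓ i) (fun τ => ∑ i ∈ Finset.range s, ind (V i) τ) σ

/-- The next bit above `σ`, chosen so as to minimise the weight. -/
def nextBit (V : ℕ → List Bool → Prop) (ℓ : ℕ → ℕ) (s : ℕ) (σ : List Bool) : Bool :=
  decide (¬ weight V ℓ (s + 1) (σ ++ [false]) ≤ weight V ℓ (s + 1) (σ ++ [true]))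

/-- The initial segments of the sequence built by `nextBit`. -/
def avoidPath (V : ℕ → List Bool → Prop) (ℓ : ℕ → ℕ) : ℕ → List Bool
  | 0 => []
  | s + 1 => avoidPath V ℓ s ++ [nextBit V ℓ s (avoidPath V ℓ s)]

theorem avoidPath_length (V : ℕ → List Bool → Prop) (ℓ : ℕ → ℕ) (s : ℕ) :
    (avoidPath V ℓ s).length = s := by
  induction s with
  | zero => rfl
  | succ s ih => simp [avoidPath, ih]

/-- The weight is the sum of the conditional measures, up to a factor that does not depend on
`σ`. -/
theorem weight_eq {V : ℕ → List Bool → Prop} {ℓ : ℕ → ℕ} (hst : ∀ i, Stable (ℓ i) (V i))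
    (s : ℕ) (σ : List Bool) :
    (weight V ℓ s σ : ℝ) =
      2 ^ (∑ i ∈ Finset.range s, ℓ i) * ∑ i ∈ Finset.range s, dens (ℓ i) (V i) σ := by
  set L := ∑ i ∈ Finset.range s, ℓ i with hL
  have h1 : weight V ℓ s σ = ∑ i ∈ Finset.range s, extSum L (ind (V i)) σ := by
    unfold weight
    simp only [extSum]
    exact Finset.sum_comm
  rw [h1, Finset.mul_sum]
  push_cast
  refine Finset.sum_congr rfl fun i hi => ?_
  rw [(hst i).dens_eq (d := L) (Finset.single_le_sum (fun _ _ => Nat.zero_le _) hi)]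
  field_simp

/-- The sum of the conditional measures above `σ` is the average of the sums above the two
extensions of `σ` by a bit, so the better bit does not increase it. -/
theorem sum_dens_nextBit_le {V : ℕ → List Bool → Prop} {ℓ : ℕ → ℕ}
    (hst : ∀ i, Stable (ℓ i) (V i)) (s : ℕ) (σ : List Bool) :
    ∑ i ∈ Finset.range (s + 1), dens (ℓ i) (V i) (σ ++ [nextBit V ℓ s σ]) ≤
      ∑ i ∈ Finset.range (s + 1), dens (ℓ i) (V i) σ := by
  have hsplit : ∑ i ∈ Finset.range (s + 1), dens (ℓ i) (V i) σ =
      (∑ i ∈ Finset.range (s + 1), dens (ℓ i) (V i) (σ ++ [false]) +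
        ∑ i ∈ Finset.range (s + 1), dens (ℓ i) (V i) (σ ++ [true])) / 2 := by
    rw [← Finset.sum_add_distrib, Finset.sum_div]
    exact Finset.sum_congr rfl fun i _ => (hst i).dens_split σ
  have hw : weight V ℓ (s + 1) (σ ++ [false]) ≤ weight V ℓ (s + 1) (σ ++ [true]) ↔
      ∑ i ∈ Finset.range (s + 1), dens (ℓ i) (V i) (σ ++ [false]) ≤
        ∑ i ∈ Finset.range (s + 1), dens (ℓ i) (V i) (σ ++ [true]) := by
    rw [← Nat.cast_le (α := ℝ), weight_eq hst, weight_eq hst]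
    exact mul_le_mul_iff_right₀ (by positivity)
  unfold nextBit
  by_cases h : weight V ℓ (s + 1) (σ ++ [false]) ≤ weight V ℓ (s + 1) (σ ++ [true])
  · have h' := hw.1 h
    simp only [h, not_true_eq_false, decide_false]
    linarith
  · have h' := not_le.1 (mt hw.2 h)
    simp only [h, not_false_eq_true, decide_true]
    linarith

theorem OComp.weight {O : ℕ →. ℕ} {V : ℕ → List Bool → Prop} {ℓ : ℕ → ℕ}
    (hV : OPred O fun p : ℕ × List Bool => V p.1 p.2) (hℓ : OComp O ℓ) :
    OComp O fun p : ℕ × List Bool => weight V ℓ p.1 p.2 := by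
  have hL : OComp O fun s : ℕ => ∑ i ∈ Finset.range s, ℓ i :=
    (OComp.sum (g := fun p : ℕ × ℕ => ℓ p.2) (hℓ.comp OComp.snd)).comp (OComp.id.pair OComp.id)
  have hF : OComp O fun p : ℕ × List Bool => ∑ i ∈ Finset.range p.1, LowBasis.ind (V i) p.2 :=
    (OComp.sum (g := fun q : List Bool × ℕ => LowBasis.ind (V q.2) q.1)
      (hV.ind.comp (OComp.snd.pair OComp.fst))).comp (OComp.snd.pair OComp.fst)
  exact OComp.extSum
    (F := fun (p : ℕ × List Bool) τ => ∑ i ∈ Finset.range p.1, LowBasis.ind (V i) τ)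
    (hF.comp ((OComp.fst.comp OComp.fst).pair OComp.snd)) (hL.comp OComp.fst) OComp.snd

theorem OComp.nextBit {O : ℕ →. ℕ} {V : ℕ → List Bool → Prop} {ℓ : ℕ → ℕ}
    (hV : OPred O fun p : ℕ × List Bool => V p.1 p.2) (hℓ : OComp O ℓ) :
    OComp O fun p : ℕ × List Bool => nextBit V ℓ p.1 p.2 := by
  have happ (b : Bool) : OComp O fun p : ℕ × List Bool =>
      LowBasis.weight V ℓ (p.1 + 1) (p.2 ++ [b]) :=
    OComp.comp (f := fun p : ℕ × List Bool => LowBasis.weight V ℓ p.1 p.2)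
      (g := fun p : ℕ × List Bool => (p.1 + 1, p.2 ++ [b])) (OComp.weight hV hℓ)
      (((OComp.of_primrec Primrec.succ).comp OComp.fst).pair
        (OComp.prim₂ Primrec.list_concat OComp.snd (OComp.const b)))
  exact OComp.of_eq (OPred.rel Primrec.nat_le (happ false) (happ true)).not fun _ => by
    unfold LowBasis.nextBit; congr

theorem OComp.avoidPath {O : ℕ →. ℕ} {V : ℕ → List Bool → Prop} {ℓ : ℕ → ℕ}
    (hV : OPred O fun p : ℕ × List Bool => V p.1 p.2) (hℓ : OComp O ℓ) :
    OComp O (avoidPath V ℓ) := by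
  have hstep : OComp O fun p : Unit × ℕ × List Bool =>
      p.2.2 ++ [LowBasis.nextBit V ℓ p.2.1 p.2.2] :=
    OComp.prim₂ Primrec.list_concat (OComp.snd.comp OComp.snd)
      ((OComp.nextBit hV hℓ).comp OComp.snd)
  refine ((OComp.nat_rec (OComp.const []) hstep).comp
    ((OComp.const ()).pair OComp.id)).of_eq fun s => ?_
  induction s with
  | zero => rfl
  | succ s ih => simp only [LowBasis.avoidPath, ← ih]

/-- An `O`-computable sequence of clopen sets of rapidly decreasing measures, whose total
measure is less than `1`, is avoided by an `O`-computable sequence. The sequence is found by the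
method of conditional expectations: the conditional measure of the union of the sets
considered so far never rises when the bit of least weight is chosen, and considering one more
set at length `s` adds at most `2 ^ s` times its measure. So the sum stays below `1`, whereas
entering one of the sets would make it at least `1`. -/
theorem exists_avoid {O : ℕ →. ℕ} {V : ℕ → List Bool → Prop} {ℓ : ℕ → ℕ}
    (hV : OPred O fun p : ℕ × List Bool => V p.1 p.2) (hℓ : OComp O ℓ)
    (hst : ∀ i, Stable (ℓ i) (V i)) (c : ℕ) (h0 : dens (ℓ 0) (V 0) [] ≤ 1 - 1 / 4 ^ c)
    (hs : ∀ i, dens (ℓ (i + 1)) (V (i + 1)) [] ≤ 1 / 4 ^ (i + 1 + c)) :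
    ∃ P : ℕ → Bool, (OComp O fun s => (List.range s).map P) ∧
      ∀ i s, ℓ i ≤ s → ¬ V i ((List.range s).map P) := by
  refine ⟨fun n => nextBit V ℓ n (avoidPath V ℓ n), ?_⟩
  have hP : ∀ s, ((List.range s).map fun n => nextBit V ℓ n (avoidPath V ℓ n)) =
      avoidPath V ℓ s := by
    intro s
    induction s with
    | zero => rfl
    | succ s ih => rw [List.range_succ, List.map_append, ih]; rfl
  simp only [hP]
  constructor
  · exact OComp.avoidPath hV hℓ
  · intro i s his hVi
    have hsum : ∀ s, ∑ i ∈ Finset.range (s + 1), dens (ℓ i) (V i) (avoidPath V ℓ s) ≤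
        1 - 1 / 4 ^ c * (1 / 2 ^ s) := by
      intro s
      induction s with
      | zero => simpa [avoidPath] using h0
      | succ s ih =>
        rw [Finset.sum_range_succ]
        have h1 := sum_dens_nextBit_le hst s (avoidPath V ℓ s)
        have h2 := (hst (s + 1)).dens_le_pow (avoidPath V ℓ (s + 1))
        rw [avoidPath_length] at h2
        have h3 : (2 : ℝ) ^ (s + 1) * dens (ℓ (s + 1)) (V (s + 1)) [] ≤
            2 ^ (s + 1) * (1 / 4 ^ (s + 1 + c)) :=
          mul_le_mul_of_nonneg_left (hs s) (by positivity)
        have h4 : (2 : ℝ) ^ (s + 1) * (1 / 4 ^ (s + 1 + c)) = 1 / 4 ^ c * (1 / 2 ^ (s + 1)) := by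
          rw [pow_add 4, show (4 : ℝ) ^ (s + 1) = 2 ^ (s + 1) * 2 ^ (s + 1) by
            rw [← mul_pow]; norm_num]
          field_simp
        have h5 : (1 : ℝ) / 2 ^ s = 2 * (1 / 2 ^ (s + 1)) := by rw [pow_succ]; field_simp
        rw [h5] at ih
        simp only [avoidPath] at h1 h2 ⊢
        linarith
    -- extend `σ` far enough for the `i`-th set to be counted in the sum
    have hmono : ∀ k, V i (avoidPath V ℓ (s + k)) := by
      intro k
      induction k with
      | zero => exact hVi
      | succ k ih => exact (hst i _ _ (by
        rw [avoidPath_length]; exact his.trans (Nat.le_add_right s k))).2 ih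
    have hone := (hst i).dens_eq_one (by rw [avoidPath_length]; omega) (hmono i)
    have hle := Finset.single_le_sum
      (f := fun j => dens (ℓ j) (V j) (avoidPath V ℓ (s + i)))
      (fun j _ => dens_nonneg _) (Finset.mem_range.2 (by omega : i < s + i + 1))
    have hlt := hsum (s + i)
    have hpos : (0 : ℝ) < 1 / 4 ^ c * (1 / 2 ^ (s + i)) := by positivity
    simp only [hone] at hle
    linarith

end

/-! ### Moduli and the low path -/

section

theorem OPred.exists_search {O : ℕ →. ℕ} {α : Type*} [Primcodable α] {p : α × ℕ → Prop}
    (hp : OPred O p) (H : ∀ a, ∃ n, p (a, n)) : ∃ f : α → ℕ, OComp O f ∧ ∀ a, p (a, f a) :=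
  ⟨_, hp.search H, fun a => Nat.find_spec (H a)⟩

/-- A set of strings closed under extension, i.e. one that generates an open set. -/
def Up (D : List Bool → Prop) : Prop := ∀ σ τ, σ <+: τ → D σ → D τ

/-- The proportion of the strings of length `k` that belong to `D`. -/
abbrev frac (D : List Bool → Prop) (k : ℕ) : ℝ := dens k D []

theorem stable_take (D : List Bool → Prop) (k : ℕ) : Stable k fun τ => D (τ.take k) := by
  intro τ b h
  simp only [List.take_append_of_le_length h]

/-- The open set generated by the strings of length `k` in `D` has measure `frac D k`, measured
at any level `d ≥ k`. -/
theorem dens_take (D : List Bool → Prop) {k d : ℕ} (h : k ≤ d) :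
    (extSum d (ind fun τ => D (τ.take k)) [] : ℝ) / 2 ^ d = frac D k := by
  rw [← (stable_take D k).dens_eq h, dens, frac, dens]
  congr 2
  refine extSum_congr fun τ hτ => ?_
  simp only [ind, List.take_of_length_le (Nat.le_of_eq (hτ.trans (Nat.zero_add k)))]

theorem Up.frac_mono {D : List Bool → Prop} (hD : Up D) : Monotone (frac D) := by
  intro k d h
  rw [← dens_take D h, frac, dens]
  refine div_le_div_of_nonneg_right (Nat.cast_le.2 (extSum_le fun τ _ => ?_)) (by positivity)
  unfold ind
  split_ifs with h1 h2 <;> simp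
  exact h2 (hD _ _ (⟨_, List.take_append_drop k τ⟩) h1)

theorem frac_add_not (D : List Bool → Prop) (k : ℕ) : frac D k + frac (fun τ => ¬ D τ) k = 1 := by
  rw [frac, frac, dens, dens, ← add_div, ← Nat.cast_add, ← extSum_add,
    extSum_congr (G := fun _ => 1), extSum_one]
  · simp
  · intro τ _
    unfold ind
    by_cases h : D τ <;> simp [h]

theorem frac_le_one (D : List Bool → Prop) (k : ℕ) : frac D k ≤ 1 := by
  have := frac_add_not D k
  have := dens_nonneg (ℓ := k) (V := fun τ => ¬ D τ) []
  linarith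

/-- The clopen set added between two consecutive moduli of the open set generated by `D e`,
where `i` codes the pair `(e, m)`. For `i = 0` nothing is subtracted. -/
def gap (D : ℕ → List Bool → Prop) (N : ℕ × ℕ → ℕ) (i : ℕ) (σ : List Bool) : Prop :=
  D i.unpair.1 (σ.take (N (i.unpair.1, i.unpair.2 + 1))) ∧
    (i = 0 ∨ ¬ D i.unpair.1 (σ.take (N i.unpair)))

/-- Let `N (e, m)` be, computably in `O`, a level by which all of the measure of the open set
generated by `D e`, up to `4 ^ (-⟨e, m⟩ - c)`, has appeared, and let `D 0` generate an open set of
measure at most `1 - 4 ^ (-c)`. An `O`-computable sequence then avoids all the gaps, so that it can enter `D e` only by length `N (e, 0)`, and it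
avoids `D 0` altogether. -/
theorem exists_path_of_modulus {O : ℕ →. ℕ} {D : ℕ → List Bool → Prop}
    (hD : OPred O fun p : ℕ × List Bool => D p.1 p.2) (hup : ∀ e, Up (D e)) {c : ℕ}
    {N : ℕ × ℕ → ℕ} (hN : OComp O N) (hNm : ∀ p, p.2 ≤ N p)
    (htail : ∀ p k, frac (D p.1) k ≤ frac (D p.1) (N p) + 1 / 4 ^ (Nat.pair p.1 p.2 + c))
    (h0 : ∀ k, frac (D 0) k ≤ 1 - 1 / 4 ^ c) :
    ∃ P : ℕ → Bool, (OComp O fun s => (List.range s).map P) ∧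
      (∀ s, ¬ D 0 ((List.range s).map P)) ∧
      ∀ e s, D (e + 1) ((List.range s).map P) →
        D (e + 1) ((List.range (N (e + 1, 0))).map P) := by
  set ℓ : ℕ → ℕ := fun i => max (N i.unpair) (N (i.unpair.1, i.unpair.2 + 1)) with hℓdef
  have hunp : OComp O Nat.unpair := OComp.of_primrec Primrec.unpair
  have hNi : OComp O fun i : ℕ => N i.unpair := hN.comp hunp
  have hNi' : OComp O fun i : ℕ => N (i.unpair.1, i.unpair.2 + 1) :=
    OComp.comp (f := N) (g := fun i : ℕ => (i.unpair.1, i.unpair.2 + 1)) hN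
      ((OComp.fst.comp hunp).pair
        ((OComp.of_primrec Primrec.succ).comp (OComp.snd.comp hunp)))
  have hℓ : OComp O ℓ := OComp.prim₂ Primrec.nat_max hNi hNi'
  have htk {f : ℕ → ℕ} (hf : OComp O f) :
      OPred O fun p : ℕ × List Bool => D p.1.unpair.1 (p.2.take (f p.1)) :=
    OPred.comp (p := fun q : ℕ × List Bool => D q.1 q.2)
      (g := fun p : ℕ × List Bool => (p.1.unpair.1, p.2.take (f p.1))) hD
      ((OComp.fst.comp (hunp.comp OComp.fst)).pair
        (OComp.prim₂ Primrec.list_take (hf.comp OComp.fst) OComp.snd))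
  have hV : OPred O fun p : ℕ × List Bool => gap D N p.1 p.2 :=
    (htk hNi').and ((OPred.rel Primrec.eq OComp.fst (OComp.const 0)).or (htk hNi).not)
  have hst : ∀ i, Stable (ℓ i) (gap D N i) := by
    intro i τ b h
    unfold gap
    rw [List.take_append_of_le_length ((le_max_left _ _).trans h),
      List.take_append_of_le_length ((le_max_right _ _).trans h)]
  have hle0 : dens (ℓ 0) (gap D N 0) [] ≤ 1 - 1 / 4 ^ c := by
    refine le_trans (Eq.le ?_) (h0 (N (0, 1)))
    rw [← dens_take (D 0) (le_max_right (N (Nat.unpair 0)) (N (0, 1))), dens]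
    congr 2
    refine extSum_congr fun τ _ => ?_
    simp [ind, gap]
  have hles : ∀ i, dens (ℓ (i + 1)) (gap D N (i + 1)) [] ≤ 1 / 4 ^ (i + 1 + c) := by
    intro i
    generalize hj : i + 1 = j
    have hj0 : j ≠ 0 := by omega
    obtain ⟨e, m, rfl⟩ : ∃ e m, j = Nat.pair e m := ⟨_, _, (Nat.pair_unpair j).symm⟩
    have hgap : ∀ τ, gap D N (Nat.pair e m) τ ↔
        D e (τ.take (N (e, m + 1))) ∧ ¬ D e (τ.take (N (e, m))) := by
      intro τ; simp [gap, hj0]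
    have hℓj : ℓ (Nat.pair e m) = max (N (e, m)) (N (e, m + 1)) := by simp [ℓ]
    rcases le_total (N (e, m + 1)) (N (e, m)) with h | h
    · refine le_trans (Eq.le ?_) (by positivity : (0 : ℝ) ≤ _)
      rw [dens, extSum_congr (G := fun _ => 0)]
      · simp [extSum]
      · intro τ _
        rw [ind, if_neg]
        rw [hgap]
        exact fun h' => h'.2 (hup e _ _ (List.take_prefix_take_left h) h'.1)
    · rw [hℓj, max_eq_right h]
      have hsum : dens (N (e, m + 1)) (gap D N (Nat.pair e m)) [] + frac (D e) (N (e, m)) =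
          frac (D e) (N (e, m + 1)) := by
        rw [← dens_take (D e) h, ← dens_take (D e) le_rfl, dens, ← add_div, ← Nat.cast_add,
          ← extSum_add]
        congr 2
        refine extSum_congr fun τ _ => ?_
        simp only [ind, hgap]
        have := hup e _ _ (List.take_prefix_take_left (l := τ) h)
        by_cases h1 : D e (τ.take (N (e, m + 1))) <;> by_cases h2 : D e (τ.take (N (e, m))) <;>
          simp_all
      have := htail (e, m) (N (e, m + 1))
      simp only at this
      linarith
  obtain ⟨P, hP, hav⟩ := exists_avoid hV hℓ hst c hle0 hles
  have htake {k s : ℕ} (h : k ≤ s) :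
      ((List.range s).map P).take k = (List.range k).map P := by
    rw [← List.map_take, List.take_range, min_eq_left h]
  have hpre {k s : ℕ} (h : k ≤ s) : (List.range k).map P <+: (List.range s).map P :=
    htake h ▸ ⟨_, List.take_append_drop k _⟩
  have hav' : ∀ e m, D e ((List.range (N (e, m + 1))).map P) →
      Nat.pair e m ≠ 0 ∧ D e ((List.range (N (e, m))).map P) := by
    intro e m hDe
    by_contra hcon
    have h1 := hav (Nat.pair e m) _ le_rfl
    simp only [gap, ℓ, Nat.unpair_pair] at h1
    rw [htake (le_max_left _ _), htake (le_max_right _ _)] at h1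
    exact h1 ⟨hDe, by tauto⟩
  refine ⟨P, hP, fun s hs => ?_, fun e s hs => ?_⟩
  · have hm : ∀ m, ¬ D 0 ((List.range (N (0, m + 1))).map P) := by
      intro m
      induction m with
      | zero => exact fun h => (hav' 0 0 h).1 rfl
      | succ m ih => exact fun h => ih (hav' 0 (m + 1) h).2
    exact hm s (hup 0 _ _ (hpre ((Nat.le_succ s).trans (hNm (0, s + 1)))) hs)
  · have hm : ∀ m, D (e + 1) ((List.range (N (e + 1, m))).map P) →
        D (e + 1) ((List.range (N (e + 1, 0))).map P) := by
      intro m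
      induction m with
      | zero => exact id
      | succ m ih => exact fun h => ih (hav' (e + 1) m h).2
    exact hm s (hup _ _ _ (hpre (hNm (e + 1, s))) hs)

/-- The tail estimate, with denominators cleared so that it can be decided on natural numbers. -/
theorem frac_le_iff (D : List Bool → Prop) (k d b : ℕ) :
    frac D d ≤ frac D k + 1 / 4 ^ b ↔
      extSum d (ind D) [] * (2 ^ k * 4 ^ b) ≤
        2 ^ d * (extSum k (ind D) [] * 4 ^ b + 2 ^ k) := by
  rw [frac, frac, dens, dens, div_add_div _ _ (by positivity) (by positivity),
    div_le_div_iff₀ (by positivity) (by positivity), ← Nat.cast_le (α := ℝ)]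
  push_cast
  rw [mul_one, mul_comm (2 ^ d : ℝ)]

/-- Moduli for a uniformly `X`-computable sequence of open sets are computable in the jump of
`X`, as it is `Π⁰₁` in `X` that the measure appearing after a given level is small. -/
theorem exists_modulus {X : Set ℕ} {D : ℕ → List Bool → Prop}
    (hD : OPred (chOracle X) fun p : ℕ × List Bool => D p.1 p.2) (hup : ∀ e, Up (D e))
    {b : ℕ × ℕ → ℕ} (hb : Primrec b) :
    ∃ N : ℕ × ℕ → ℕ, OComp (chOracle (jumpSet X)) N ∧ (∀ p, p.2 ≤ N p) ∧
      ∀ p k, frac (D p.1) k ≤ frac (D p.1) (N p) + 1 / 4 ^ b p := by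
  have hE {α : Type} [Primcodable α] {f g : α → ℕ} (hf : OComp (chOracle X) f)
      (hg : OComp (chOracle X) g) :
      OComp (chOracle X) fun a => extSum (g a) (ind (D (f a))) [] :=
    OComp.extSum (F := fun a => ind (D (f a)))
      (OComp.comp (f := fun p : ℕ × List Bool => ind (D p.1) p.2)
        (g := fun q : α × List Bool => (f q.1, q.2)) hD.ind ((hf.comp OComp.fst).pair OComp.snd))
      hg (OComp.const [])
  have hmul {α : Type} [Primcodable α] {f g : α → ℕ} (hf : OComp (chOracle X) f)
      (hg : OComp (chOracle X) g) : OComp (chOracle X) fun a => f a * g a :=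
    OComp.prim₂ Primrec.nat_mul hf hg
  have hadd {α : Type} [Primcodable α] {f g : α → ℕ} (hf : OComp (chOracle X) f)
      (hg : OComp (chOracle X) g) : OComp (chOracle X) fun a => f a + g a :=
    OComp.prim₂ Primrec.nat_add hf hg
  have hex : OPred (chOracle X) fun q : ((ℕ × ℕ) × ℕ) × ℕ =>
      ¬ frac (D q.1.1.1) q.2 ≤ frac (D q.1.1.1) q.1.2 + 1 / 4 ^ b q.1.1 := by
    have hd : OComp (chOracle X) fun q : ((ℕ × ℕ) × ℕ) × ℕ => q.2 := OComp.snd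
    have hk : OComp (chOracle X) fun q : ((ℕ × ℕ) × ℕ) × ℕ => q.1.2 := OComp.snd.comp OComp.fst
    have hp : OComp (chOracle X) fun q : ((ℕ × ℕ) × ℕ) × ℕ => q.1.1 := OComp.fst.comp OComp.fst
    have he : OComp (chOracle X) fun q : ((ℕ × ℕ) × ℕ) × ℕ => q.1.1.1 := OComp.fst.comp hp
    have h2 {f : ((ℕ × ℕ) × ℕ) × ℕ → ℕ} (hf : OComp (chOracle X) f) (n : ℕ) :
        OComp (chOracle X) fun q => n ^ f q := OComp.pow (OComp.const n) hf
    have h4 := h2 ((OComp.of_primrec hb).comp hp) 4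
    refine (OPred.rel Primrec.nat_le (hmul (hE he hd) (hmul (h2 hk 2) h4))
      (hmul (h2 hd 2) (hadd (hmul (hE he hk) h4) (h2 hk 2)))).not.of_iff fun q => ?_
    rw [frac_le_iff]
  have hp : OPred (chOracle (jumpSet X)) fun q : (ℕ × ℕ) × ℕ =>
      q.1.2 ≤ q.2 ∧ ¬ ∃ k, ¬ frac (D q.1.1) k ≤ frac (D q.1.1) q.2 + 1 / 4 ^ b q.1 :=
    (OPred.rel Primrec.nat_le (OComp.snd.comp OComp.fst) OComp.snd).and
      (OPred.exists_jump hex).not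
  have H : ∀ p : ℕ × ℕ, ∃ n, p.2 ≤ n ∧
      ¬ ∃ k, ¬ frac (D p.1) k ≤ frac (D p.1) n + 1 / 4 ^ b p := by
    intro p
    have hbdd : BddAbove (Set.range (frac (D p.1))) :=
      ⟨1, by rintro _ ⟨k, rfl⟩; exact frac_le_one _ _⟩
    have hlt : (⨆ k, frac (D p.1) k) - 1 / 4 ^ b p < ⨆ k, frac (D p.1) k :=
      sub_lt_self _ (by positivity)
    obtain ⟨n, hn⟩ := exists_lt_of_lt_ciSup hlt
    refine ⟨max p.2 n, le_max_left _ _, ?_⟩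
    rintro ⟨k, hk⟩
    have h1 := le_ciSup hbdd k
    have h2 := (hup p.1).frac_mono (le_max_right p.2 n)
    exact hk (by linarith)
  obtain ⟨N, hN, hN'⟩ := hp.exists_search H
  refine ⟨N, hN, fun p => (hN' p).1, fun p k => ?_⟩
  by_contra hcon
  exact (hN' p).2 ⟨k, hcon⟩

/-- The enumeration of strings by `bits` counts each string of length `k` once. -/
theorem lvlCard_eq (T : Set (List Bool)) (k : ℕ) : lvlCard T k = extSum k (ind (· ∈ T)) [] := by
  have h : ∀ (d : ℕ) (σ : List Bool), {τ : List Bool | τ.length = d}.Finite ∧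
      {τ | σ ++ τ ∈ T ∧ τ.length = d}.ncard = extSum d (ind (· ∈ T)) σ := by
    intro d
    induction d with
    | zero =>
      intro σ
      refine ⟨(Set.finite_singleton []).subset fun τ h => List.length_eq_zero_iff.1 h, ?_⟩
      rw [extSum_zero, ind]
      split_ifs with h
      · rw [Set.ncard_eq_one]
        refine ⟨[], Set.ext fun τ => ⟨fun h => List.length_eq_zero_iff.1 h.2, ?_⟩⟩
        rintro rfl
        simpa using h
      · rw [Set.ncard_eq_zero ((Set.finite_singleton []).subset
          fun τ h => List.length_eq_zero_iff.1 h.2), Set.eq_empty_iff_forall_notMem]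
        rintro τ ⟨h1, h2⟩
        rw [List.length_eq_zero_iff.1 h2, List.append_nil] at h1
        exact h h1
    | succ d ih =>
      intro σ
      have hfin := (ih []).1
      constructor
      · refine ((hfin.image (List.cons false)).union (hfin.image (List.cons true))).subset ?_
        rintro (_ | ⟨b, τ⟩) h
        · simp at h
        · cases b
          · exact .inl ⟨τ, by simpa using h, rfl⟩
          · exact .inr ⟨τ, by simpa using h, rfl⟩
      · have hset : {τ | σ ++ τ ∈ T ∧ τ.length = d + 1} =
            List.cons false '' {τ | (σ ++ [false]) ++ τ ∈ T ∧ τ.length = d} ∪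
              List.cons true '' {τ | (σ ++ [true]) ++ τ ∈ T ∧ τ.length = d} := by
          ext τ
          rcases τ with _ | ⟨b, τ⟩
          · simp
          · cases b <;> simp
        rw [hset, Set.ncard_union_eq ?_ ((hfin.subset fun τ h => h.2).image _)
            ((hfin.subset fun τ h => h.2).image _), Set.ncard_image_of_injective _ (List.cons_injective),
          Set.ncard_image_of_injective _ (List.cons_injective), (ih _).2, (ih _).2, extSum_succ]
        · rw [Set.disjoint_left]
          rintro _ ⟨τ, _, rfl⟩ ⟨τ', _, h⟩
          simp at h
  rw [← (h k []).2]
  rfl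

theorem treeMeasure_eq (T : Set (List Bool)) : treeMeasure T = ⨅ s, frac (· ∈ T) s := by
  unfold treeMeasure
  simp only [lvlCard_eq]
  rfl

theorem treeMeasure_le (T : Set (List Bool)) (s : ℕ) : treeMeasure T ≤ frac (· ∈ T) s := by
  rw [treeMeasure_eq]
  exact ciInf_le ⟨0, by rintro _ ⟨k, rfl⟩; exact dens_nonneg _⟩ s

/-- The numerator of a rational, truncated at `0`, read off from the code of the rational. -/
theorem num_toNat_eq (q : ℚ) : q.num.toNat =
    if (encode q).unpair.1 % 2 = 0 then (encode q).unpair.1 / 2 else 0 := by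
  have h : encode q = Nat.pair (Equiv.intEquivNat q.num) q.den := rfl
  rw [h, Nat.unpair_pair]
  cases q.num with
  | ofNat n =>
    have : Equiv.intEquivNat (Int.ofNat n) = 2 * n := rfl
    rw [this]; simp
  | negSucc n =>
    have : Equiv.intEquivNat (Int.negSucc n) = 2 * n + 1 := rfl
    rw [this, if_neg (by omega)]; rfl

/-- A modulus for the complement of a tree is obtained from approximations to the measure of the
tree: once the proportion of strings in the tree is close to the measure, little measure is
left to be removed. -/
theorem exists_modulus_tree {O : ℕ →. ℕ} {T : Set (List Bool)} (hT : OPred O (· ∈ T))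
    (htree : ∀ σ τ : List Bool, σ <+: τ → τ ∈ T → σ ∈ T) {a : ℕ → ℚ}
    (ha : RecIn O (fnOracle fun n => encode (a n)))
    (hμ : ∀ n : ℕ, |(a n : ℝ) - treeMeasure T| ≤ 1 / 2 ^ n) {b : ℕ → ℕ} (hb : Primrec b) :
    ∃ N : ℕ → ℕ, OComp O N ∧ (∀ m, m ≤ N m) ∧
      ∀ m k, frac (fun σ => ¬ σ ∈ T) k ≤ frac (fun σ => ¬ σ ∈ T) (N m) + 1 / 4 ^ b m := by
  have hanti : Antitone (frac (· ∈ T)) := by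
    have hup : Up fun σ => ¬ σ ∈ T := fun σ τ h hσ hτ => hσ (htree σ τ h hτ)
    intro k d h
    have h1 := frac_add_not (· ∈ T) k
    have h2 := frac_add_not (· ∈ T) d
    have h3 := hup.frac_mono h
    linarith
  have hμ0 : 0 ≤ treeMeasure T := by
    rw [treeMeasure_eq]; exact le_ciInf fun k => dens_nonneg _
  -- the approximation is used to within a quarter of the allowed error, as three such errors
  -- accumulate
  have hM (m : ℕ) : (1 : ℝ) / 2 ^ (2 * b m + 2) = 1 / 4 ^ b m / 4 := by
    rw [pow_add, pow_mul, div_div]; norm_num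
  -- the searched-for inequality, in natural numbers
  have hiff (m k : ℕ) : extSum k (ind (· ∈ T)) [] *
        (2 ^ (2 * b m + 2) * (a (2 * b m + 2)).den) ≤
        2 ^ k * ((a (2 * b m + 2)).num.toNat * 2 ^ (2 * b m + 2) +
          2 * (a (2 * b m + 2)).den) ↔
      frac (· ∈ T) k ≤ max (a (2 * b m + 2) : ℝ) 0 + 2 * (1 / 2 ^ (2 * b m + 2)) := by
    generalize a (2 * b m + 2) = q
    generalize 2 * b m + 2 = M
    have hden : (0 : ℝ) < q.den := by exact_mod_cast q.den_pos
    have hq : max (q : ℝ) 0 = (q.num.toNat : ℝ) / q.den := by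
      have h1 : ((q.num.toNat : ℤ) : ℝ) = max (q.num : ℝ) 0 := by
        rw [Int.toNat_eq_max]; push_cast; rfl
      rw [← Int.cast_natCast (R := ℝ), h1, ← max_div_div_right hden.le, zero_div,
        Rat.cast_def]
    rw [hq, frac, dens, ← Nat.cast_le (α := ℝ), mul_one_div,
      div_add_div _ _ hden.ne' (by positivity), div_le_div_iff₀ (by positivity) (by positivity)]
    push_cast
    constructor <;> intro h <;> linarith
  have hp : OPred O fun q : ℕ × ℕ => q.1 ≤ q.2 ∧ frac (· ∈ T) q.2 ≤
      max (a (2 * b q.1 + 2) : ℝ) 0 + 2 * (1 / 2 ^ (2 * b q.1 + 2)) := by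
    have hm : OComp O fun q : ℕ × ℕ => q.1 := OComp.fst
    have hk : OComp O fun q : ℕ × ℕ => q.2 := OComp.snd
    have hMc : OComp O fun q : ℕ × ℕ => 2 * b q.1 + 2 :=
      OComp.prim₂ Primrec.nat_add (OComp.prim₂ Primrec.nat_mul (OComp.const 2)
        ((OComp.of_primrec hb).comp hm)) (OComp.const 2)
    have hcode : OComp O fun q : ℕ × ℕ => (encode (a (2 * b q.1 + 2))).unpair :=
      (OComp.of_primrec Primrec.unpair).comp ((OComp.nat_iff.2 ha).comp hMc)
    have hnum : OComp O fun q : ℕ × ℕ => (a (2 * b q.1 + 2)).num.toNat :=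
      (OComp.ite (OPred.rel Primrec.eq
          (OComp.prim₂ Primrec.nat_mod (OComp.fst.comp hcode) (OComp.const 2)) (OComp.const 0))
        (OComp.prim₂ Primrec.nat_div (OComp.fst.comp hcode) (OComp.const 2))
        (OComp.const 0)).of_eq fun q => by rw [num_toNat_eq]; congr
    have hden : OComp O fun q : ℕ × ℕ => (a (2 * b q.1 + 2)).den :=
      (OComp.snd.comp hcode).of_eq fun q => by
        have h : encode (a (2 * b q.1 + 2)) = Nat.pair
          (Equiv.intEquivNat (a (2 * b q.1 + 2)).num) (a (2 * b q.1 + 2)).den := rfl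
        rw [h, Nat.unpair_pair]
    have hlvl : OComp O fun q : ℕ × ℕ => extSum q.2 (ind (· ∈ T)) [] :=
      OComp.extSum (F := fun _ => ind (· ∈ T))
        (OPred.ind (V := fun _ : ℕ × ℕ => (· ∈ T)) (hT.comp OComp.snd)) hk (OComp.const [])
    have h2M := OComp.pow (OComp.const 2) hMc
    refine (OPred.rel Primrec.nat_le hm hk).and ((OPred.rel Primrec.nat_le
      (OComp.prim₂ Primrec.nat_mul hlvl (OComp.prim₂ Primrec.nat_mul h2M hden))
      (OComp.prim₂ Primrec.nat_mul (OComp.pow (OComp.const 2) hk)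
        (OComp.prim₂ Primrec.nat_add (OComp.prim₂ Primrec.nat_mul hnum h2M)
          (OComp.prim₂ Primrec.nat_mul (OComp.const 2) hden)))).of_iff fun q => ?_)
    exact hiff q.1 q.2
  have H : ∀ m, ∃ k, m ≤ k ∧ frac (· ∈ T) k ≤
      max (a (2 * b m + 2) : ℝ) 0 + 2 * (1 / 2 ^ (2 * b m + 2)) := by
    intro m
    have hlt : (⨅ s, frac (· ∈ T) s) < treeMeasure T + 1 / 2 ^ (2 * b m + 2) := by
      rw [← treeMeasure_eq]; exact lt_add_of_pos_right _ (by positivity)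
    obtain ⟨k, hk⟩ := exists_lt_of_ciInf_lt hlt
    refine ⟨max m k, le_max_left _ _, ?_⟩
    have h1 := hanti (le_max_right m k)
    have h2 := (abs_le.1 (hμ (2 * b m + 2))).1
    have h3 := le_max_left (a (2 * b m + 2) : ℝ) 0
    linarith
  obtain ⟨N, hN, hN'⟩ := hp.exists_search H
  refine ⟨N, hN, fun m => (hN' m).1, fun m k => ?_⟩
  have h1 := (hN' m).2
  simp only at h1
  generalize N m = n at h1 ⊢
  have h2 := (abs_le.1 (hμ (2 * b m + 2))).2
  have h3 : max (a (2 * b m + 2) : ℝ) 0 ≤ treeMeasure T + 1 / 2 ^ (2 * b m + 2) :=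
    max_le (by linarith) (by positivity)
  have h4 := treeMeasure_le T k
  have h5 := frac_add_not (· ∈ T) k
  have h6 := frac_add_not (· ∈ T) n
  have h7 : (0 : ℝ) < 1 / 4 ^ b m := by positivity
  rw [hM] at h1 h3
  linarith

theorem lookup_mono {σ τ ξ ζ : List Bool} (h : σ <+: τ) (h' : ξ <+: ζ) {q v : ℕ}
    (hv : lookup σ ξ q = some v) : lookup τ ζ q = some v := by
  obtain ⟨σ', rfl⟩ := h
  obtain ⟨ξ', rfl⟩ := h'
  unfold lookup at hv ⊢
  rw [Option.map_eq_some_iff] at hv ⊢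
  obtain ⟨b, hb, rfl⟩ := hv
  refine ⟨b, ?_, rfl⟩
  split_ifs at hb ⊢ <;>
  · obtain ⟨hlt, -⟩ := List.getElem?_eq_some_iff.1 hb
    rw [List.getElem?_append_left hlt, hb]

theorem Conv.mono {e : ℕ} {σ τ ξ ζ : List Bool} (h : σ <+: τ) (h' : ξ <+: ζ)
    (hc : Conv e σ ξ) : Conv e τ ζ := by
  obtain ⟨he, u, hu, h1, h2, h3⟩ := hc
  exact ⟨he, u, hu.trans_le h.length_le, h1, fun x hx h4 => lookup_mono h h' (h2 x hx h4), h3⟩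

/-- The first `k` values of the characteristic function of `X`. -/
def initSeg (X : Set ℕ) (k : ℕ) : List Bool := (List.range k).map fun i => decide (i ∈ X)

theorem initSeg_mono (X : Set ℕ) {k s : ℕ} (h : k ≤ s) : initSeg X k <+: initSeg X s := by
  have : initSeg X k = (initSeg X s).take k := by
    rw [initSeg, initSeg, ← List.map_take, List.take_range, min_eq_left h]
  exact this ▸ ⟨_, List.take_append_drop _ _⟩

theorem OComp.initSeg (X : Set ℕ) : OComp (chOracle X) (initSeg X) :=
  (OComp.listRange (g := fun p : Unit × ℕ => decide (p.2 ∈ X))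
    (OPred.comp (OPred.mem_self X) OComp.snd)).comp ((OComp.const ()).pair OComp.id)

theorem lookup_initSeg (A X : Set ℕ) (k q : ℕ) : lookup (initSeg A k) (initSeg X k) q =
    if q / 2 < k then some (if q ∈ joinSet A X then 1 else 0) else none := by
  unfold lookup initSeg joinSet
  by_cases hk : q / 2 < k <;> rcases Nat.mod_two_eq_zero_or_one q with h | h <;>
    simp [h, hk]

/-- The use principle: a computation relative to `A ⊕ X` halts exactly when some finite part of
the oracle makes it halt. -/
theorem mem_jumpSet_join (A X : Set ℕ) (e : ℕ) : e ∈ jumpSet (joinSet A X) ↔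
    ∃ k, Conv e (initSeg A k) (initSeg X k) := by
  rw [jumpSet, Set.mem_ofPred_eq, chOracle_eq, phi_dom_iff]
  constructor
  · rintro ⟨he, w, hw, v, hv⟩
    refine ⟨encode w + (w.map fun x => x.2.1).sum + 1, he, encode w, ?_, ?_⟩
    · simp only [initSeg, List.length_map, List.length_range]; omega
    simp only [encodek, Option.getD_some]
    refine ⟨hw.1, fun x hx h4 => ?_, _, hv, rfl, rfl⟩
    have hle : x.2.1 ≤ (w.map fun x => x.2.1).sum :=
      List.le_sum_of_mem (List.mem_map_of_mem (f := fun x : Entry => x.2.1) hx)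
    rw [lookup_initSeg, if_pos (by omega), hw.2 x hx h4]
  · rintro ⟨k, he, u, -, h1, h2, x, hx, hxe, hxe'⟩
    refine ⟨he, _, ⟨h1, fun y hy h4 => ?_⟩, x.2.2, ?_⟩
    · have := h2 y hy h4
      rw [lookup_initSeg] at this
      split_ifs at this <;> simp_all
    · obtain ⟨x₁, x₂, v⟩ := x
      simp only at hxe hxe'
      subst hxe hxe'
      exact hx

end

end LowBasis

open LowBasis

/-- Low basis theorem for `Δ⁰₂` trees of known positive measure: an
`X'`-computable binary tree whose measure is a positive `X'`-computable real
has an infinite path low over `X`. -/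
theorem stmt15 (X : Set ℕ) (T : Set (List Bool))
    (htree : ∀ σ τ : List Bool, σ <+: τ → τ ∈ T → σ ∈ T)
    (hTcomp : RecIn (chOracle (jumpSet X)) (fnOracle (listBoolChar T)))
    (hpos : 0 < treeMeasure T)
    (hmeas : ∃ a : ℕ → ℚ,
      RecIn (chOracle (jumpSet X)) (fnOracle fun n => Encodable.encode (a n)) ∧
      ∀ n : ℕ, |(a n : ℝ) - treeMeasure T| ≤ 1 / 2 ^ n) :
    ∃ P : ℕ → Bool, (∀ s : ℕ, (List.range s).map P ∈ T) ∧
      setLEset (jumpSet (joinSet {n | P n = true} X)) (jumpSet X) := by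
  obtain ⟨a, ha, hμ⟩ := hmeas
  obtain ⟨c, hc⟩ := exists_pow_lt_of_lt_one hpos (by norm_num : (1 / 4 : ℝ) < 1)
  rw [one_div_pow] at hc
  have hT : OPred (chOracle (jumpSet X)) (· ∈ T) := by
    have h : OComp (chOracle (jumpSet X)) fun σ : List Bool => if σ ∈ T then 1 else 0 :=
      ⟨_, hTcomp, fun σ => by
        have h1 : Encodable.decode (α := List Bool) (Encodable.encode σ) = some σ :=
          Encodable.encodek σ
        simp only [listBoolChar]
        rw [h1]; rfl⟩
    refine (OPred.rel Primrec.eq h (OComp.const 1)).of_iff fun σ => ?_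
    by_cases hσ : σ ∈ T <;> simp [hσ]
  have hConv : OPred (chOracle X) fun p : ℕ × List Bool =>
      Conv p.1 p.2 (initSeg X p.2.length) :=
    OPred.comp (p := fun q : ℕ × List Bool × List Bool => Conv q.1 q.2.1 q.2.2)
      (g := fun p : ℕ × List Bool => (p.1, p.2, initSeg X p.2.length))
      (OPred.of_primrec primrec_conv) (OComp.fst.pair (OComp.snd.pair ((OComp.initSeg X).comp
        ((OComp.of_primrec Primrec.list_length).comp OComp.snd))))
  have hupC : ∀ e, Up fun σ => Conv e σ (initSeg X σ.length) := fun e σ τ h =>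
    Conv.mono h (initSeg_mono X h.length_le)
  have hupT : Up fun σ => ¬ σ ∈ T := fun σ τ h hσ hτ => hσ (htree σ τ h hτ)
  have hb1 : Primrec fun p : ℕ × ℕ => Nat.pair (p.1 + 1) p.2 + c :=
    Primrec.nat_add.comp (Primrec₂.natPair.comp (Primrec.succ.comp Primrec.fst) Primrec.snd)
      (Primrec.const c)
  have hb0 : Primrec fun m : ℕ => Nat.pair 0 m + c :=
    Primrec.nat_add.comp (Primrec₂.natPair.comp (Primrec.const 0) Primrec.id) (Primrec.const c)
  obtain ⟨N₁, hN₁, hN₁m, hN₁t⟩ :=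
    exists_modulus (D := fun e σ => Conv e σ (initSeg X σ.length)) hConv hupC hb1
  obtain ⟨N₀, hN₀, hN₀m, hN₀t⟩ := exists_modulus_tree hT htree ha hμ hb0
  -- `D 0` is the complement of the tree, and `D (e + 1)` is the set of the initial segments that
  -- make the `e`-th program halt on `e`
  let D : ℕ → List Bool → Prop := fun e σ =>
    (e = 0 ∧ ¬ σ ∈ T) ∨ (e ≠ 0 ∧ Conv (e - 1) σ (initSeg X σ.length))
  have hD0 : D 0 = fun σ => ¬ σ ∈ T := by funext σ; simp [D]
  have hD1 (e : ℕ) : D (e + 1) = fun σ => Conv e σ (initSeg X σ.length) := by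
    funext σ; simp [D]
  have heq0 {β : Type} [Primcodable β] :
      OPred (chOracle (jumpSet X)) fun p : ℕ × β => p.1 = 0 :=
    OPred.rel Primrec.eq OComp.fst (OComp.const 0)
  have hpred {β : Type} [Primcodable β] :
      OComp (chOracle (jumpSet X)) fun p : ℕ × β => (p.1 - 1, p.2) :=
    ((OComp.of_primrec Primrec.pred).comp OComp.fst).pair OComp.snd
  have hD : OPred (chOracle (jumpSet X)) fun p : ℕ × List Bool => D p.1 p.2 :=
    (heq0.and (hT.comp OComp.snd).not).or (heq0.not.and
      (OPred.comp (p := fun p : ℕ × List Bool => Conv p.1 p.2 (initSeg X p.2.length))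
        (g := fun p : ℕ × List Bool => (p.1 - 1, p.2)) hConv.to_jump hpred))
  obtain ⟨N, hN, hNz, hNs⟩ : ∃ N : ℕ × ℕ → ℕ, OComp (chOracle (jumpSet X)) N ∧
      (∀ m, N (0, m) = N₀ m) ∧ ∀ e m, N (e + 1, m) = N₁ (e, m) :=
    ⟨_, OComp.ite heq0 (hN₀.comp OComp.snd) (hN₁.comp hpred), fun m => by simp,
      fun e m => by simp⟩
  obtain ⟨P, hP, hPT, hPJ⟩ := exists_path_of_modulus (c := c) hD
    (by rintro (_ | e); exacts [hD0 ▸ hupT, hD1 e ▸ hupC e]) hN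
    (by rintro ⟨_ | e, m⟩; exacts [hNz m ▸ hN₀m m, hNs e m ▸ hN₁m (e, m)])
    (by
      rintro ⟨_ | e, m⟩ k
      · simpa only [hD0, hNz] using hN₀t m k
      · simpa only [hD1, hNs] using hN₁t (e, m) k)
    (by
      intro k
      have h1 := treeMeasure_le T k
      have h2 := frac_add_not (· ∈ T) k
      rw [hD0]
      linarith)
  refine ⟨P, fun s => ?_, ?_⟩
  · have := hPT s
    rw [hD0] at this
    exact not_not.1 this
  · have hseg (s : ℕ) : initSeg {n | P n = true} s = (List.range s).map P := by
      simp [initSeg]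
    have hlen (s : ℕ) : ((List.range s).map P).length = s := by simp
    have hJ : OPred (chOracle (jumpSet X)) fun e : ℕ =>
        e ∈ jumpSet (joinSet {n | P n = true} X) := by
      refine OPred.of_iff (p := fun e => D (e + 1) ((List.range (N (e + 1, 0))).map P)) ?_ ?_
      · have hs : OComp (chOracle (jumpSet X)) fun e : ℕ => e + 1 := OComp.of_primrec Primrec.succ
        exact OPred.comp (p := fun p : ℕ × List Bool => D p.1 p.2)
          (g := fun e : ℕ => (e + 1, (List.range (N (e + 1, 0))).map P)) hD
          (hs.pair (hP.comp (hN.comp (hs.pair (OComp.const 0)))))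
      · intro e
        rw [mem_jumpSet_join]
        simp only [hseg]
        have h (s : ℕ) : D (e + 1) ((List.range s).map P) ↔
            Conv e ((List.range s).map P) (initSeg X s) := by
          rw [hD1]; simp only [hlen]
        exact ⟨fun h1 => ⟨_, (h _).1 h1⟩, fun ⟨k, hk⟩ => hPJ e k ((h k).2 hk)⟩
    exact OComp.nat_iff.1 (OComp.ite hJ (OComp.const 1) (OComp.const 0))

end
end

section
/- If X ⊆ 2^ℕ is of hyperimmune-free degree (equivalently Π⁰₁-generic), then X does not compute any function that is diagonally non-computable relative to ∅′. Consequently, every function d.n.c. relative to ∅′ is of hyperimmune degree. -/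
/-!
Let `h` be d.n.c. relative to `∅'`. For a program index `c`, let `m(c)` be the least `v` at which
`φ_c ⟨c, v⟩` diverges. By the s-m-n theorem there is a computable `δ` such that `m(c)`, when
defined, is the output of the `δ(c)`-th program with oracle `∅'`, even on input `δ(c)`
(`exists_index`); hence `h (δ c) ≠ m(c)`.

The relation `m(c) = v` is `Σ⁰₂`, of the form `∃ a, ∀ b, stable c v a b` with `stable` primitive
recursive and antitone in `b`. So `h` computes a function `f` sending `⟨c, a⟩` to a stage `b` that
refutes the witness `a` for `m(c) = h (δ c)` (`exists_refuting`). No computable `g` dominates `f`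
(`no_computable_bound`): after a finite modification `f ≤ g` everywhere, and the `v` that are
refuted within the bound `g`, for all `a`, form a `Π⁰₁` set, uniformly in `c`. Choose `c` such that
`φ_c ⟨c, v⟩` diverges exactly when `v` is in this set. The set contains `h (δ c)`, so it has a
least element, which is `m(c)`; but the correct value `m(c)` has a witness that is never refuted.

Thus `f` witnesses that `h` has hyperimmune degree. The statement about sets `X` of
hyperimmune-free degree follows by transitivity of relative computability.
-/


open Classical Filter

noncomputable section

/-! ### Oracle codes and relative computability -/

theorem encodeC_injective : Function.Injective OCode.encodeC := by
  intro a
  induction a with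
  | zero | succ | left | right | oracle =>
    intro b h; cases b <;> simp [OCode.encodeC] at h ⊢
  | pair a₁ a₂ ih₁ ih₂ | comp a₁ a₂ ih₁ ih₂ | prec a₁ a₂ ih₁ ih₂ =>
    intro b h
    cases b <;> simp [OCode.encodeC] at h ⊢
    exact ⟨ih₁ h.1, ih₂ h.2⟩
  | rfind' a ih =>
    intro b h
    cases b <;> simp [OCode.encodeC] at h ⊢
    exact ih h

theorem phi_encodeC (O : ℕ →. ℕ) (c : OCode) : phi O c.encodeC = c.eval O := by
  have h : ∃ d : OCode, d.encodeC = c.encodeC := ⟨c, rfl⟩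
  have hp : phi O c.encodeC = h.choose.eval O := dif_pos h
  rw [hp, encodeC_injective h.choose_spec]

/-- Partial recursive functions are partial recursive in every oracle, by a code that does not
depend on the oracle. -/
theorem exists_ocode_of_partrec {f : ℕ →. ℕ} (hf : Nat.Partrec f) :
    ∃ c : OCode, ∀ O, c.eval O = f := by
  induction hf with
  | zero => exact ⟨.zero, fun _ => rfl⟩
  | succ => exact ⟨.succ, fun _ => rfl⟩
  | left => exact ⟨.left, fun _ => rfl⟩
  | right => exact ⟨.right, fun _ => rfl⟩
  | pair _ _ h₁ h₂ =>
    obtain ⟨a, ha⟩ := h₁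
    obtain ⟨b, hb⟩ := h₂
    exact ⟨.pair a b, fun O => by simp only [OCode.eval, ha, hb]; rfl⟩
  | comp _ _ h₁ h₂ =>
    obtain ⟨a, ha⟩ := h₁
    obtain ⟨b, hb⟩ := h₂
    exact ⟨.comp a b, fun O => by simp only [OCode.eval, ha, hb]; rfl⟩
  | prec _ _ h₁ h₂ =>
    obtain ⟨a, ha⟩ := h₁
    obtain ⟨b, hb⟩ := h₂
    exact ⟨.prec a b, fun O => by simp only [OCode.eval, ha, hb]; rfl⟩
  | rfind _ h₁ =>
    obtain ⟨a, ha⟩ := h₁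
    exact ⟨.rfind' a, fun O => by simp only [OCode.eval, ha]; rfl⟩

theorem eval_comp {O : ℕ →. ℕ} {a b : OCode} {n m : ℕ} (h : b.eval O n = Part.some m) :
    (OCode.comp a b).eval O n = a.eval O m := by
  change (b.eval O n).bind (a.eval O) = _
  rw [h]
  exact Part.bind_some _ _

theorem eval_pair {O : ℕ →. ℕ} {a b : OCode} {n x y : ℕ} (ha : a.eval O n = Part.some x)
    (hb : b.eval O n = Part.some y) :
    (OCode.pair a b).eval O n = Part.some (Nat.pair x y) := by
  change Nat.pair <$> a.eval O n <*> b.eval O n = _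
  rw [ha, hb]
  simp [Seq.seq]

theorem exists_ocode_of_computable {f : ℕ → ℕ} (hf : Computable f) :
    ∃ c : OCode, ∀ O n, c.eval O n = Part.some (f n) := by
  obtain ⟨c, hc⟩ := exists_ocode_of_partrec (Partrec.nat_iff.1 hf)
  exact ⟨c, fun O n => by rw [hc]; rfl⟩

theorem partrec_of_recIn_empty {f : ℕ →. ℕ} (hf : RecIn (chOracle ∅) f) : Nat.Partrec f := by
  obtain ⟨c, rfl⟩ := hf
  induction c with
  | zero => exact .zero
  | succ => exact .succ
  | left => exact .left
  | right => exact .right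
  | oracle =>
    have : OCode.oracle.eval (chOracle ∅) = (pure 0 : ℕ →. ℕ) := by
      funext n
      simp only [OCode.eval, chOracle, Set.mem_empty_iff_false, if_false]
      rfl
    rw [this]
    exact .zero
  | pair a b ha hb => exact ha.pair hb
  | comp a b ha hb => exact ha.comp hb
  | prec a b ha hb => exact ha.prec hb
  | rfind' a ha => exact ha.rfind

theorem RecIn.trans {O P f : ℕ →. ℕ} (hf : RecIn O f) (hO : RecIn P O) : RecIn P f := by
  obtain ⟨d, rfl⟩ := hO
  obtain ⟨c, rfl⟩ := hf
  induction c with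
  | zero => exact ⟨.zero, rfl⟩
  | succ => exact ⟨.succ, rfl⟩
  | left => exact ⟨.left, rfl⟩
  | right => exact ⟨.right, rfl⟩
  | oracle => exact ⟨d, rfl⟩
  | pair a b ha hb =>
    obtain ⟨a', ha⟩ := ha
    obtain ⟨b', hb⟩ := hb
    exact ⟨.pair a' b', by simp only [OCode.eval, ha, hb]; rfl⟩
  | comp a b ha hb =>
    obtain ⟨a', ha⟩ := ha
    obtain ⟨b', hb⟩ := hb
    exact ⟨.comp a' b', by simp only [OCode.eval, ha, hb]; rfl⟩
  | prec a b ha hb =>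
    obtain ⟨a', ha⟩ := ha
    obtain ⟨b', hb⟩ := hb
    exact ⟨.prec a' b', by simp only [OCode.eval, ha, hb]; rfl⟩
  | rfind' a ha =>
    obtain ⟨a', ha⟩ := ha
    exact ⟨.rfind' a', by simp only [OCode.eval, ha]; rfl⟩

/-- A code for the constant function `n`. -/
def constCode : ℕ → OCode
  | 0 => .zero
  | n + 1 => .comp .succ (constCode n)

theorem constCode_eval (O : ℕ →. ℕ) (n x : ℕ) : (constCode n).eval O x = Part.some n := by
  induction n with
  | zero => rfl
  | succ n ih =>
    exact eval_comp ih

theorem encodeC_constCode_primrec : Primrec fun n => (constCode n).encodeC := by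
  have h : Primrec fun n : ℕ =>
      (Nat.rec (Nat.pair 0 0) (fun _ k => Nat.pair 6 (Nat.pair (Nat.pair 1 0) k)) n : ℕ) :=
    Primrec.nat_rec₁ _ (Primrec₂.natPair.comp (.const 6)
      (Primrec₂.natPair.comp (.const (Nat.pair 1 0)) Primrec.snd))
  refine h.of_eq fun n => ?_
  induction n with
  | zero => rfl
  | succ n ih => simp only [constCode, OCode.encodeC, ← ih]

/-! ### A `Σ⁰₂` approximation to the least point of divergence -/

/-- `halts s c v`: the `c`-th program (in Mathlib's numbering) halts on input `⟨c, v⟩` within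
`s` steps. -/
def halts (s c v : ℕ) : Bool :=
  ((Denumerable.ofNat Nat.Partrec.Code c).evaln s (Nat.pair c v)).isSome

/-- `allHalt a c v`: `halts a c w` for all `w < v`. -/
def allHalt (a c v : ℕ) : Bool := Nat.rec true (fun w b => b && halts a c w) v

theorem allHalt_iff (a c v : ℕ) : allHalt a c v = true ↔ ∀ w < v, halts a c w = true := by
  induction v with
  | zero => simp [allHalt]
  | succ v ih =>
    have : allHalt a c (v + 1) = (allHalt a c v && halts a c v) := rfl
    rw [this, Bool.and_eq_true, ih, Nat.forall_lt_succ_right]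

theorem halts_mono {s t c v : ℕ} (hst : s ≤ t) (h : halts s c v = true) :
    halts t c v = true := by
  obtain ⟨x, hx⟩ := Option.isSome_iff_exists.1 h
  exact Option.isSome_iff_exists.2 ⟨x, Nat.Partrec.Code.evaln_mono hst hx⟩

theorem exists_halts_iff (c v : ℕ) : (∃ s, halts s c v = true) ↔
    ((Denumerable.ofNat Nat.Partrec.Code c).eval (Nat.pair c v)).Dom := by
  rw [Part.dom_iff_mem]
  simp only [Nat.Partrec.Code.evaln_complete, halts, Option.isSome_iff_exists, Option.mem_def]
  exact exists_comm

/-- `stable c v a b`: up to stage `b`, stage `a` looks like a witness that `v` is the least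
number at which `w ↦ φ_c ⟨c, w⟩` diverges. The statement that `v` is this number is the
`Σ⁰₂` statement `∃ a, ∀ b, stable c v a b`. -/
def stable (c v a b : ℕ) : Bool := allHalt a c v && !halts b c v

theorem stable_iff (c v a b : ℕ) :
    stable c v a b = true ↔ (∀ w < v, halts a c w = true) ∧ ¬ halts b c v = true := by
  simp [stable, allHalt_iff]

theorem stable_anti {c v a b b' : ℕ} (h : b ≤ b') (hs : stable c v a b' = true) :
    stable c v a b = true := by
  rw [stable_iff] at hs ⊢
  exact ⟨hs.1, fun hb => hs.2 (halts_mono h hb)⟩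

section Primrec
variable {α : Type*} [Primcodable α]

theorem halts_primrec {s c v : α → ℕ} (hs : Primrec s) (hc : Primrec c) (hv : Primrec v) :
    Primrec fun x => halts (s x) (c x) (v x) :=
  Primrec.option_isSome.comp <| Nat.Partrec.Code.primrec_evaln.comp <|
    ((hs.pair ((Primrec.ofNat _).comp hc)).pair (Primrec₂.natPair.comp hc hv))

theorem stable_primrec {c v a b : α → ℕ} (hc : Primrec c) (hv : Primrec v) (ha : Primrec a)
    (hb : Primrec b) : Primrec fun x => stable (c x) (v x) (a x) (b x) := by
  refine Primrec.and.comp ?_ (Primrec.not.comp (halts_primrec hb hc hv))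
  exact Primrec.nat_rec' hv (.const true)
    (Primrec.to₂ (Primrec.and.comp (Primrec.snd.comp Primrec.snd)
      (halts_primrec (ha.comp Primrec.fst) (hc.comp Primrec.fst)
        (Primrec.fst.comp Primrec.snd))))

end Primrec

/-! ### Reduction to `∅'` -/

/-- A single code computing `⟨c, v⟩ ↦ φ_c ⟨c, v⟩` for every oracle. -/
theorem exists_universal : ∃ u : OCode, ∀ O c v, u.eval O (Nat.pair c v) =
    (Denumerable.ofNat Nat.Partrec.Code c).eval (Nat.pair c v) := by
  have h : Partrec fun x : ℕ =>
      (Denumerable.ofNat Nat.Partrec.Code x.unpair.1).eval x :=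
    Nat.Partrec.Code.eval_part.comp
      ((Computable.ofNat _).comp (Computable.fst.comp Computable.unpair)) Computable.id
  obtain ⟨u, hu⟩ := exists_ocode_of_partrec (Partrec.nat_iff.1 h)
  exact ⟨u, fun O c v => by rw [hu]; beta_reduce; rw [Nat.unpair_pair]⟩

/-- Membership in `∅'` decides, uniformly in `⟨c, v⟩`, whether `φ_c ⟨c, v⟩` converges. -/
theorem exists_reduction : ∃ q : ℕ → ℕ, Computable q ∧ ∀ c v,
    q (Nat.pair c v) ∈ jumpSet ∅ ↔ ∃ s, halts s c v = true := by
  obtain ⟨u, hu⟩ := exists_universal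
  refine ⟨fun x => (OCode.comp u (constCode x)).encodeC, ?_, fun c v => ?_⟩
  · exact (Primrec₂.natPair.comp (.const 6)
      (Primrec₂.natPair.comp (.const u.encodeC) encodeC_constCode_primrec)).to_comp
  · rw [exists_halts_iff, ← hu (chOracle ∅), ← eval_comp (constCode_eval _ _ _), ← phi_encodeC]
    rfl

/-- There is a computable `δ` such that, for all `c`, the `δ c`-th program with oracle `∅'`
outputs the least `v` for which `φ_c ⟨c, v⟩` diverges, provided this `v` exists. -/
theorem exists_index : ∃ δ : ℕ → ℕ, Computable δ ∧ ∀ c v a,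
    (∀ b, stable c v a b = true) → v ∈ phi (chOracle (jumpSet ∅)) (δ c) (δ c) := by
  obtain ⟨q, hq, hqK⟩ := exists_reduction
  obtain ⟨p, hp⟩ := exists_ocode_of_computable hq
  refine ⟨fun c => (OCode.rfind' (.comp .oracle
    (.comp p (.pair (constCode c) .right)))).encodeC, ?_, fun c v a hv => ?_⟩
  · exact (Primrec₂.natPair.comp (.const 8) <| Primrec₂.natPair.comp (.const 6) <|
      Primrec₂.natPair.comp (.const OCode.oracle.encodeC) <| Primrec₂.natPair.comp (.const 6) <|
      Primrec₂.natPair.comp (.const p.encodeC) <| Primrec₂.natPair.comp (.const 5) <|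
      Primrec₂.natPair.comp encodeC_constCode_primrec (.const OCode.right.encodeC)).to_comp
  · simp only [stable_iff] at hv
    rw [phi_encodeC]
    have key : ∀ n m, (OCode.comp .oracle (.comp p (.pair (constCode c) .right))).eval
        (chOracle (jumpSet ∅)) (Nat.pair n m) =
        Part.some (if ∃ s, halts s c m = true then 1 else 0) := by
      intro n m
      have hright : OCode.right.eval (chOracle (jumpSet ∅)) (Nat.pair n m) = Part.some m :=
        congrArg (fun p : ℕ × ℕ => Part.some p.2) (Nat.unpair_pair n m)
      rw [eval_comp ((eval_comp (eval_pair (constCode_eval _ _ _) hright)).trans (hp _ _))]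
      simp only [← hqK]
      rfl
    rw [OCode.eval]
    refine Nat.mem_rfind.2 ⟨?_, fun {m} hm => ?_⟩
    · rw [key, if_neg (by rintro ⟨s, hs⟩; exact (hv s).2 hs)]
      simp
    · rw [key, if_pos ⟨a, (hv 0).1 m hm⟩]
      simp

/-! ### The undominated function -/

/-- The witness function computed from `h`: on `⟨c, a⟩` it returns a stage refuting that `a`
witnesses that `h (δ c)` is the least `v` with `φ_c ⟨c, v⟩` divergent. -/
theorem exists_refuting {δ h : ℕ → ℕ} (hδ : Computable δ)
    (hst : ∀ c a, ∃ b, ¬ stable c (h (δ c)) a b = true) :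
    ∃ f : ℕ → ℕ, RecIn (fnOracle h) (fnOracle f) ∧
      ∀ c a, ¬ stable c (h (δ c)) a (f (Nat.pair c a)) = true := by
  have hst' : ∀ n : ℕ, ∃ b, ¬ stable n.unpair.1 (h (δ n.unpair.1)) n.unpair.2 b = true :=
    fun n => hst _ _
  -- arguments `⟨⟨⟨c, a⟩, b⟩, v⟩`
  have hr : Primrec fun x : ℕ => (stable x.unpair.1.unpair.1.unpair.1 x.unpair.2
      x.unpair.1.unpair.1.unpair.2 x.unpair.1.unpair.2).toNat := by
    have l : Primrec fun x : ℕ => x.unpair.1 := Primrec.fst.comp Primrec.unpair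
    have r : Primrec fun x : ℕ => x.unpair.2 := Primrec.snd.comp Primrec.unpair
    exact (Primrec.dom_bool Bool.toNat).comp
      (stable_primrec (l.comp (l.comp l)) r (r.comp (l.comp l)) (r.comp l))
  obtain ⟨r, hr⟩ := exists_ocode_of_computable hr.to_comp
  obtain ⟨d, hd⟩ := exists_ocode_of_computable hδ
  obtain ⟨i, hi⟩ := exists_ocode_of_computable Computable.id
  refine ⟨fun n => Nat.find (hst' n), ⟨.rfind' (.comp r (.pair i
    (.comp .oracle (.comp d (.comp .left .left))))), ?_⟩, fun c a => ?_⟩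
  · funext n
    have key : ∀ m, (OCode.comp r (.pair i
        (.comp .oracle (.comp d (.comp .left .left))))).eval (fnOracle h) (Nat.pair n m) =
        Part.some (stable n.unpair.1 (h (δ n.unpair.1)) n.unpair.2 m).toNat := by
      intro m
      have hl : ∀ x, OCode.left.eval (fnOracle h) x = Part.some x.unpair.1 := fun _ => rfl
      have ho : ∀ x, OCode.oracle.eval (fnOracle h) x = Part.some (h x) := fun _ => rfl
      rw [eval_comp (eval_pair (hi _ _) ((eval_comp ((eval_comp ((eval_comp (hl _)).trans
        (hl _))).trans (hd _ _))).trans (ho _))), hr]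
      simp
    rw [OCode.eval]
    refine Part.eq_some_iff.2 (Nat.mem_rfind.2 ⟨?_, fun {m} hm => ?_⟩)
    · have := Nat.find_spec (hst' n)
      rw [key]
      simpa using this
    · have := Nat.find_min (hst' n) hm
      rw [key]
      simpa using this
  · simpa using Nat.find_spec (hst' (Nat.pair c a))

/-- No computable function bounds the stages refuting all guesses `(c, a)` for the values of a
function of `c`: otherwise divergence of a suitable `φ_c ⟨c, v⟩` expresses that `v` is
refuted within the bound, and the least such `v` is refuted although it is correct. -/
theorem no_computable_bound {y g : ℕ → ℕ} (hg : Computable g)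
    (hy : ∀ c a, ¬ stable c (y c) a (g (Nat.pair c a)) = true) : False := by
  have hP : Partrec fun x : ℕ => Nat.rfind fun a =>
      Part.some (stable x.unpair.1 x.unpair.2 a (g (Nat.pair x.unpair.1 a))) := by
    suffices hcomp : Computable fun t : ℕ × ℕ => stable t.1.unpair.1 t.1.unpair.2 t.2
        (g (Nat.pair t.1.unpair.1 t.2)) from Partrec.rfind hcomp.partrec.to₂
    have hs : Primrec fun t : (ℕ × ℕ) × (ℕ × ℕ) => stable t.1.1 t.1.2 t.2.1 t.2.2 :=
      stable_primrec (Primrec.fst.comp Primrec.fst) (Primrec.snd.comp Primrec.fst)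
        (Primrec.fst.comp Primrec.snd) (Primrec.snd.comp Primrec.snd)
    have hx : Computable fun t : ℕ × ℕ => t.1.unpair := Computable.unpair.comp Computable.fst
    have hgx : Computable fun t : ℕ × ℕ => g (Nat.pair t.1.unpair.1 t.2) :=
      hg.comp (Primrec₂.natPair.to_comp.comp (Computable.fst.comp hx) Computable.snd)
    have ht : Computable fun t : ℕ × ℕ =>
        ((t.1.unpair, (t.2, g (Nat.pair t.1.unpair.1 t.2))) : (ℕ × ℕ) × (ℕ × ℕ)) :=
      hx.pair (Computable.snd.pair hgx)
    have hs' := hs.to_comp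
    -- an abstract `stable` keeps unification from unfolding the evaluator
    generalize stable = S at hs' ⊢
    exact hs'.comp ht
  obtain ⟨C, hC⟩ := Nat.Partrec.Code.exists_code.1 (Partrec.nat_iff.1 hP)
  obtain ⟨c, hc⟩ : ∃ c, Denumerable.ofNat Nat.Partrec.Code c = C :=
    ⟨Encodable.encode C, Denumerable.ofNat_encode C⟩
  have hdom : ∀ v, (∃ s, halts s c v = true) ↔ ∃ a, stable c v a (g (Nat.pair c a)) = true := by
    intro v
    rw [exists_halts_iff, hc, hC]
    refine Nat.rfind_dom.trans ?_
    simp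
  have hex : ∃ v, ¬ ∃ s, halts s c v = true :=
    ⟨y c, by rw [hdom]; rintro ⟨a, ha⟩; exact hy c a ha⟩
  have hv := Nat.find_spec hex
  have hlt : ∀ w < Nat.find hex, ∃ s, halts s c w = true :=
    fun w hw => not_not.1 (Nat.find_min hex hw)
  generalize Nat.find hex = v at hv hlt
  choose! s hs using hlt
  refine hv ((hdom v).2 ⟨(Finset.range v).sup s, (stable_iff _ _ _ _).2 ⟨fun w hw => ?_, ?_⟩⟩)
  · exact halts_mono (Finset.le_sup (f := s) (Finset.mem_range.2 hw)) (hs w hw)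
  · exact fun h => hv ⟨_, h⟩

theorem hyperimmune_of_dnc (h : ℕ → ℕ)
    (hh : ∀ e : ℕ, h e ∉ phi (chOracle (jumpSet ∅)) e e) :
    ∃ f : ℕ → ℕ, RecIn (fnOracle h) (fnOracle f) ∧
      ∀ g : ℕ → ℕ, RecIn (chOracle ∅) (fnOracle g) → ∃ᶠ n in atTop, g n ≤ f n := by
  obtain ⟨δ, hδ, hδK⟩ := exists_index
  obtain ⟨f, hf, hfs⟩ := exists_refuting (h := h) hδ fun c a => by
    by_contra! hcon
    exact hh _ (hδK c _ a hcon)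
  refine ⟨f, hf, fun g hg hfg => ?_⟩
  have hgc : Computable g := Partrec.nat_iff.2 (partrec_of_recIn_empty hg)
  obtain ⟨N, hN⟩ := eventually_atTop.1 hfg
  -- a constant summand turns eventual domination into domination everywhere
  have hle : ∀ n, f n ≤ g n + (Finset.range N).sup f := by
    intro n
    rcases le_or_gt N n with h' | h'
    · have := hN n h'
      omega
    · exact le_add_left (Finset.le_sup (f := f) (Finset.mem_range.2 h'))
  exact no_computable_bound (y := fun c => h (δ c)) (Primrec.nat_add.to_comp.comp hgc
    (Computable.const _)) fun c a hs => hfs c a (stable_anti (hle _) hs)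

/-- No set of hyperimmune-free degree computes a function d.n.c. relative to
`∅'`; consequently every function d.n.c. relative to `∅'` is of hyperimmune
degree. -/
theorem stmt16 :
    (∀ X : Set ℕ,
      (∀ f : ℕ → ℕ, RecIn (chOracle X) (fnOracle f) →
        ∃ g : ℕ → ℕ, RecIn (chOracle ∅) (fnOracle g) ∧ ∀ᶠ n in atTop, f n < g n) →
      ∀ h : ℕ → ℕ, RecIn (chOracle X) (fnOracle h) →
        ¬ ∀ e : ℕ, h e ∉ phi (chOracle (jumpSet ∅)) e e) ∧
    (∀ h : ℕ → ℕ, (∀ e : ℕ, h e ∉ phi (chOracle (jumpSet ∅)) e e) →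
      ∃ f : ℕ → ℕ, RecIn (fnOracle h) (fnOracle f) ∧
        ∀ g : ℕ → ℕ, RecIn (chOracle ∅) (fnOracle g) →
          ∃ᶠ n in atTop, g n ≤ f n) := by
  refine ⟨fun X hX h hh hdnc => ?_, hyperimmune_of_dnc⟩
  obtain ⟨f, hf, hfg⟩ := hyperimmune_of_dnc h hdnc
  obtain ⟨g, hg, hlt⟩ := hX f (hf.trans hh)
  obtain ⟨n, hn₁, hn₂⟩ := ((hfg g hg).and_eventually hlt).exists
  omega

end
end
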